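/- arXiv:1108.4980 — 2 statements merged into one kernel-verified Lean document; each statement's English description precedes it below -/
import Mathlib

section
/- Let x > 0 be real, set q = e^{−π/x} and μ = R(−q) · R(q²)², where R denotes the Rogers–Ramanujan continued fraction. Then F_{(5,1)}(x) = −(π/(5√5 · x)) · log( (2 − μ + 18μ² + μ³ + 2μ⁴ + 5√5(μ + μ³)) / (2 − μ + 18μ² + μ³ + 2μ⁴ − 5√5(μ + μ³)) ) − (π/(5x)) · log( (1 + μ − μ²) / (1 − 4μ − μ²) ). -/
open Filter

/-- The Legendre symbol `(n|5)`: `+1` if `n ≡ ±1 (mod 5)`, `-1` if `n ≡ ±2 (mod 5)`,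
`0` if `5 ∣ n`. -/
def legSym5 (n : ℕ) : ℤ :=
  if n % 5 = 1 ∨ n % 5 = 4 then 1 else if n % 5 = 2 ∨ n % 5 = 3 then -1 else 0

/-- The real fifth root of a real number `t`. -/
noncomputable def fifthRoot (t : ℝ) : ℝ := Real.sign t * |t| ^ ((1 : ℝ) / 5)

/-- The Rogers–Ramanujan continued fraction, via the product formula
`R(t) = t^{1/5} ∏_{n=1}^∞ (1 - t^n)^{(n|5)}` for real `|t| < 1`. -/
noncomputable def RR (t : ℝ) : ℝ :=
  fifthRoot t * ∏' n : ℕ, (1 - t ^ (n + 1)) ^ legSym5 (n + 1)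

open Topology

section
variable {K : Type*} [NormedField K] [CompleteSpace K]

/-- q-Pochhammer infinite product. -/
noncomputable def poch (x s : K) : K := ∏' k : ℕ, (1 - x * s ^ k)

lemma poch_summable (x : K) {s : K} (hs : ‖s‖ < 1) : Summable (fun k : ℕ => ‖-(x * s ^ k)‖) := by
  simp only [norm_neg, norm_mul, norm_pow]
  exact (summable_geometric_of_lt_one (norm_nonneg _) hs).mul_left _

lemma poch_mult (x : K) {s : K} (hs : ‖s‖ < 1) : Multipliable (fun k : ℕ => 1 - x * s ^ k) := by
  simpa [sub_eq_add_neg] using multipliable_one_add_of_summable (poch_summable x hs)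

lemma poch_tendsto (x : K) {s : K} (hs : ‖s‖ < 1) :
    Tendsto (fun n => ∏ k ∈ Finset.range n, (1 - x * s ^ k)) atTop (𝓝 (poch x s)) :=
  (poch_mult x hs).hasProd.tendsto_prod_nat

lemma poch_ne_zero (x : K) {s : K} (hs : ‖s‖ < 1) (h : ∀ k : ℕ, x * s ^ k ≠ 1) :
    poch x s ≠ 0 := by
  have := tprod_one_add_ne_zero_of_summable (f := fun k : ℕ => -(x * s ^ k))
    (fun k => by rw [← sub_eq_add_neg]; exact sub_ne_zero.2 (h k).symm) (poch_summable x hs)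
  simpa [poch, sub_eq_add_neg] using this

lemma poch_ne_zero' {x : K} {s : K} (hs : ‖s‖ < 1) (hx : ‖x‖ < 1) :
    poch x s ≠ 0 := by
  apply poch_ne_zero x hs
  intro k hk
  have h1 : ‖x * s ^ k‖ < 1 := by
    rw [norm_mul, norm_pow]
    calc ‖x‖ * ‖s‖ ^ k ≤ ‖x‖ * 1 := by
          gcongr; exact pow_le_one₀ (norm_nonneg _) hs.le
      _ < 1 := by simpa
  rw [hk, norm_one] at h1
  exact lt_irrefl _ h1

lemma prod_range_mul_aux (f : ℕ → K) (m n : ℕ) :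
    ∏ k ∈ Finset.range (m * n), f k =
      ∏ k ∈ Finset.range n, ∏ i ∈ Finset.range m, f (m * k + i) := by
  induction n with
  | zero => simp
  | succ n ih => rw [Finset.prod_range_succ, ← ih, Nat.mul_succ, Finset.prod_range_add]

/-- grouping a product by residues -/
lemma tprod_group (f : ℕ → K) (m : ℕ) (hm : 0 < m) (hf : Multipliable f)
    (hg : ∀ i ∈ Finset.range m, Multipliable (fun k => f (m * k + i))) :
    ∏' n, f n = ∏ i ∈ Finset.range m, ∏' k, f (m * k + i) := by
  have h1 : Tendsto (fun n => ∏ k ∈ Finset.range (m * n), f k) atTop (𝓝 (∏' n, f n)) :=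
    hf.hasProd.tendsto_prod_nat.comp (tendsto_id.const_mul_atTop' hm)
  have h2 : Tendsto (fun n => ∏ i ∈ Finset.range m, ∏ k ∈ Finset.range n, f (m * k + i)) atTop
      (𝓝 (∏ i ∈ Finset.range m, ∏' k, f (m * k + i))) :=
    tendsto_finsetProd _ (fun i hi => (hg i hi).hasProd.tendsto_prod_nat)
  refine tendsto_nhds_unique h1 (h2.congr (fun n => ?_))
  rw [prod_range_mul_aux, Finset.prod_comm]

lemma poch_group (x : K) {s : K} (hs : ‖s‖ < 1) (m : ℕ) (hm : 0 < m) :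
    poch x s = ∏ i ∈ Finset.range m, poch (x * s ^ i) (s ^ m) := by
  have hsm : ‖s ^ m‖ < 1 := by
    rw [norm_pow]; exact pow_lt_one₀ (norm_nonneg _) hs hm.ne'
  have e : ∀ i k : ℕ, 1 - x * s ^ (m * k + i) = 1 - (x * s ^ i) * (s ^ m) ^ k := by
    intro i k; rw [pow_add, pow_mul]; ring
  unfold poch
  rw [tprod_group _ m hm (poch_mult x hs)]
  · simp_rw [e]
  · intro i _
    simp_rw [e]
    exact poch_mult _ hsm

/-! ### Jacobi triple product -/

lemma summable_sq_nat {r c : ℝ} (hr0 : 0 < r) (hr : r < 1) (hc : 0 < c) :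
    Summable (fun n : ℕ => r ^ (n ^ 2) * c ^ n) := by
  have hpos : ∀ n : ℕ, 0 < r ^ (n ^ 2) * c ^ n := fun n => by positivity
  apply summable_of_ratio_test_tendsto_lt_one (l := 0) one_pos
  · exact Eventually.of_forall fun n => (hpos n).ne'
  · have : ∀ n : ℕ, ‖r ^ ((n + 1) ^ 2) * c ^ (n + 1)‖ / ‖r ^ (n ^ 2) * c ^ n‖
        = (r ^ 2) ^ n * (r * c) := by
      intro n
      rw [Real.norm_of_nonneg (hpos _).le, Real.norm_of_nonneg (hpos _).le,
        div_eq_iff (hpos n).ne']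
      ring
    simp_rw [this]
    have := (tendsto_pow_atTop_nhds_zero_of_lt_one (by positivity : 0 ≤ r ^ 2)
      (by nlinarith : r ^ 2 < 1)).mul_const (r * c)
    simpa using this

lemma summable_sq_int {r c : ℝ} (hr0 : 0 < r) (hr : r < 1) (hc : 0 < c) :
    Summable (fun n : ℤ => r ^ (n ^ 2) * c ^ n) := by
  apply Summable.of_nat_of_neg
  · refine (summable_sq_nat hr0 hr hc).congr fun n => ?_
    norm_cast
  · refine (summable_sq_nat hr0 hr (inv_pos.2 hc)).congr fun n => ?_
    rw [neg_sq]
    simp only [zpow_neg, inv_pow, zpow_natCast]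
    norm_cast

/-- term of theta series -/
noncomputable def tht (s w : K) (n : ℤ) : K := (-1) ^ n * s ^ (n ^ 2) * w ^ n

lemma tht_norm_summable {s w : K} (hs0 : s ≠ 0) (hs : ‖s‖ < 1) (hw : w ≠ 0) :
    Summable (fun n : ℤ => ‖tht s w n‖) := by
  simpa [tht] using summable_sq_int (norm_pos_iff.2 hs0) hs (norm_pos_iff.2 hw)

/-- reciprocal finite Pochhammer, extended by zero -/
noncomputable def dd (q : K) (m : ℤ) : K :=
  if m < 0 then 0 else (∏ k ∈ Finset.range m.toNat, (1 - q * q ^ k))⁻¹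

lemma one_sub_pow_ne {q : K} (hq : ‖q‖ < 1) (k : ℕ) : 1 - q * q ^ k ≠ 0 := by
  intro h
  have h1 : ‖q ^ (k + 1)‖ < 1 := by
    rw [norm_pow]; exact pow_lt_one₀ (norm_nonneg _) hq (by simp)
  rw [pow_succ', ← sub_eq_zero.1 h, norm_one] at h1
  exact lt_irrefl _ h1

lemma dd_pred {q : K} (hq : ‖q‖ < 1) (m : ℤ) : dd q (m - 1) = (1 - q ^ m) * dd q m := by
  rcases lt_trichotomy m 0 with h | h | h
  · simp [dd, h, show m - 1 < 0 by lia]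
  · subst h; simp [dd]
  · obtain ⟨n, rfl⟩ : ∃ n : ℕ, m = n + 1 := ⟨(m - 1).toNat, by lia⟩
    have h1 : ((n : ℤ) + 1).toNat = n + 1 := by lia
    have h2 : ((n : ℤ) + 1 - 1).toNat = n := by lia
    rw [dd, dd, if_neg (by lia), if_neg (by lia), h1, h2, Finset.prod_range_succ, mul_inv]
    have := one_sub_pow_ne hq n
    have h3 : q ^ ((n : ℤ) + 1) = q * q ^ n := by
      rw [← pow_succ']; norm_cast
    rw [h3]
    field_simp

lemma fin_jtp {s w : K} (hs0 : s ≠ 0) (hs : ‖s‖ < 1) (hw : w ≠ 0) (n : ℕ) :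
    HasSum (fun j : ℤ => tht s w j * ((∏ k ∈ Finset.range (2 * n), (1 - s ^ 2 * (s ^ 2) ^ k)) *
      dd (s ^ 2) (n - j) * dd (s ^ 2) (n + j)))
      ((∏ k ∈ Finset.range n, (1 - w * s * (s ^ 2) ^ k)) *
        ∏ k ∈ Finset.range n, (1 - s / w * (s ^ 2) ^ k)) := by
  have hq : ‖s ^ 2‖ < 1 := by rw [norm_pow]; exact pow_lt_one₀ (norm_nonneg _) hs (by simp)
  induction n with
  | zero =>
    have := hasSum_ite_eq (0 : ℤ) (1 : K)
    simp only [Nat.mul_zero, Finset.range_zero, Finset.prod_empty, mul_one]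
    refine this.congr_fun ?_ |> fun h => h
    intro j
    by_cases h : j = 0
    · subst h; simp [tht, dd]
    · rw [if_neg h]
      rcases lt_or_gt_of_ne h with h | h
      · simp [dd, h]
      · simp [dd, h]
  | succ n ih =>
    have i1 := ih.mul_left (1 + s ^ (4 * n + 2))
    have i2 := ((Equiv.subRight (1 : ℤ)).hasSum_iff.2 ih).mul_left (- w * s ^ (2 * n + 1))
    have i3 := ((Equiv.addRight (1 : ℤ)).hasSum_iff.2 ih).mul_left (- w⁻¹ * s ^ (2 * n + 1))
    have := (i1.add i2).add i3
    rw [Finset.prod_range_succ, Finset.prod_range_succ]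
    have key : ∀ {f g : ℤ → K} {a b : K}, HasSum g b → (∀ j, f j = g j) → a = b → HasSum f a := by
      intro f g a b h1 h2 h3
      rw [h3, funext h2]; exact h1
    refine key this (fun j => ?_) ?_
    · simp only [Function.comp, Equiv.subRight_apply, Equiv.coe_addRight, Nat.cast_add, Nat.cast_one]
      rw [show 2 * (n + 1) = 2 * n + 1 + 1 by ring, Finset.prod_range_succ, Finset.prod_range_succ]
      set P := ∏ k ∈ Finset.range (2 * n), (1 - s ^ 2 * (s ^ 2) ^ k)
      have e1 := dd_pred hq ((n : ℤ) + 1 - j)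
      have e2 := dd_pred hq ((n : ℤ) + 1 + j)
      have e3 := dd_pred hq ((n : ℤ) + j)
      have e4 := dd_pred hq ((n : ℤ) - j)
      rw [show (n : ℤ) + 1 - j - 1 = n - j by ring] at e1
      rw [show (n : ℤ) + 1 + j - 1 = n + j by ring] at e2
      rw [show (n : ℤ) - (j - 1) = n + 1 - j by ring, show (n : ℤ) + (j - 1) = n + j - 1 by ring,
        show (n : ℤ) - (j + 1) = n - j - 1 by ring, show (n : ℤ) + (j + 1) = n + 1 + j by ring,
        e3, e4, e1, e2]
      set A := dd (s ^ 2) ((n : ℤ) + 1 - j)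
      set B := dd (s ^ 2) ((n : ℤ) + 1 + j)
      have t1 : tht s w (j - 1) = - tht s w j * s * (s ^ j)⁻¹ ^ 2 * w⁻¹ := by
        simp only [tht]
        rw [show (j - 1) ^ 2 = j ^ 2 + 1 + (- j) + (- j) by ring, zpow_add₀ hs0, zpow_add₀ hs0,
          zpow_add₀ hs0, zpow_sub₀ hw, zpow_sub₀ (by simp), zpow_neg]
        simp
        ring
      have t2 : tht s w (j + 1) = - tht s w j * s * (s ^ j) ^ 2 * w := by
        simp only [tht]
        rw [show (j + 1) ^ 2 = j ^ 2 + 1 + j + j by ring, zpow_add₀ hs0, zpow_add₀ hs0,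
          zpow_add₀ hs0, zpow_add₀ hw, zpow_add₀ (by simp)]
        simp
        ring
      rw [t1, t2]
      have sq : ∀ m : ℤ, (s ^ 2) ^ m = (s ^ m) ^ 2 := fun m => by
        rw [← zpow_natCast, ← zpow_natCast, zpow_comm]
      simp only [sq, zpow_add₀ hs0, zpow_sub₀ hs0, zpow_one, zpow_natCast]
      have hY : s ^ j ≠ 0 := zpow_ne_zero _ hs0
      have hX : s ^ n ≠ 0 := pow_ne_zero _ hs0
      rw [show 4 * n + 2 = n + n + n + n + 2 by ring, show 2 * n + 1 = n + n + 1 by ring,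
        show (s ^ 2) ^ (n + n + 1) = (s ^ n) ^ 4 * s ^ 2 by ring,
        show (s ^ 2) ^ (2 * n) = (s ^ n) ^ 4 by ring]
      simp only [pow_add]
      generalize s ^ j = Y at *
      generalize s ^ n = X at *
      field_simp
      ring
    · have h1 : s ^ (2 * n + 1) = s * (s ^ n) ^ 2 := by ring
      have h2 : s ^ (4 * n + 2) = s ^ 2 * (s ^ n) ^ 4 := by ring
      have h3 : (s ^ 2) ^ n = (s ^ n) ^ 2 := by ring
      rw [h1, h2, h3]
      field_simp
      ring

lemma dd_tendsto {q : K} (hq : ‖q‖ < 1) :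
    Tendsto (fun n : ℕ => dd q (n : ℤ)) atTop (𝓝 (poch q q)⁻¹) := by
  have := (poch_tendsto q hq).inv₀ (poch_ne_zero' hq hq)
  refine this.congr fun n => ?_
  simp [dd]

lemma dd_bdd {q : K} (hq : ‖q‖ < 1) : ∃ C : ℝ, 0 ≤ C ∧ ∀ m : ℤ, ‖dd q m‖ ≤ C := by
  obtain ⟨C, hC⟩ := (dd_tendsto hq).norm.bddAbove_range
  refine ⟨max C 0, le_max_right _ _, fun m => ?_⟩
  by_cases h : m < 0
  · simp [dd, h]
  · obtain ⟨n, rfl⟩ := Int.eq_ofNat_of_zero_le (not_lt.1 h)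
    exact le_max_of_le_left (hC ⟨n, rfl⟩)

theorem jtp {s w : K} (hs0 : s ≠ 0) (hs : ‖s‖ < 1) (hw : w ≠ 0) :
    HasSum (tht s w) (poch (s ^ 2) (s ^ 2) * poch (w * s) (s ^ 2) * poch (s / w) (s ^ 2)) := by
  have hq : ‖s ^ 2‖ < 1 := by rw [norm_pow]; exact pow_lt_one₀ (norm_nonneg _) hs (by simp)
  have hne := poch_ne_zero' hq hq
  obtain ⟨C, hC0, hC⟩ := dd_bdd hq
  obtain ⟨D, hD⟩ := (poch_tendsto (s ^ 2) hq).norm.bddAbove_range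
  have hsum := tht_norm_summable hs0 hs hw
  have key := tendsto_tsum_of_dominated_convergence (𝓕 := atTop)
    (f := fun (n : ℕ) (j : ℤ) => tht s w j *
      ((∏ k ∈ Finset.range (2 * n), (1 - s ^ 2 * (s ^ 2) ^ k)) *
      dd (s ^ 2) (n - j) * dd (s ^ 2) (n + j)))
    (g := fun j => tht s w j * (poch (s ^ 2) (s ^ 2) * (poch (s ^ 2) (s ^ 2))⁻¹ *
      (poch (s ^ 2) (s ^ 2))⁻¹))
    (bound := fun j => ‖tht s w j‖ * (D * C * C)) (hsum.mul_right _) ?_ ?_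
  · have h2 := ((poch_tendsto (w * s) hq).mul (poch_tendsto (s / w) hq))
    have h3 := tendsto_nhds_unique
      (h2.congr (fun n => (fin_jtp hs0 hs hw n).tsum_eq.symm)) key
    rw [tsum_mul_right, mul_inv_cancel₀ hne, one_mul] at h3
    have h4 : ∑' j, tht s w j =
        poch (s ^ 2) (s ^ 2) * poch (w * s) (s ^ 2) * poch (s / w) (s ^ 2) := by
      rw [mul_assoc, h3]
      field_simp
    rw [← h4]
    exact hsum.of_norm.hasSum
  · intro j
    refine Tendsto.const_mul _ (Tendsto.mul (Tendsto.mul ?_ ?_) ?_)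
    · exact (poch_tendsto (s ^ 2) hq).comp (tendsto_id.const_mul_atTop' two_pos)
    · have : Tendsto (fun n : ℕ => ((n : ℤ) - j).toNat) atTop atTop := by
        refine tendsto_atTop.2 fun b => ?_
        filter_upwards [eventually_ge_atTop (b + j.natAbs)] with n hn
        lia
      refine ((dd_tendsto hq).comp this).congr' ?_
      filter_upwards [eventually_ge_atTop (j.natAbs)] with n hn
      simp only [Function.comp]
      congr 1; lia
    · have : Tendsto (fun n : ℕ => ((n : ℤ) + j).toNat) atTop atTop := by
        refine tendsto_atTop.2 fun b => ?_
        filter_upwards [eventually_ge_atTop (b + j.natAbs)] with n hn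
        lia
      refine ((dd_tendsto hq).comp this).congr' ?_
      filter_upwards [eventually_ge_atTop (j.natAbs)] with n hn
      simp only [Function.comp]
      congr 1; lia
  · refine Eventually.of_forall fun n j => ?_
    rw [norm_mul, norm_mul, norm_mul]
    have h1 : ‖∏ k ∈ Finset.range (2 * n), (1 - s ^ 2 * (s ^ 2) ^ k)‖ ≤ D := hD ⟨2 * n, rfl⟩
    have hD0 : 0 ≤ D := (norm_nonneg _).trans h1
    gcongr
    · exact hC _
    · exact hC _

end

section
variable {K : Type*} [NormedField K] [CompleteSpace K]

lemma tsum_reindex {n : ℕ} {X Y : Type*} (F : Y → K) (hF : Summable F) (e : Fin n × X → Y)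
    (he : Function.Bijective e) (hF' : ∀ c, Summable (fun p => F (e (c, p)))) :
    ∑' p, F p = ∑ c : Fin n, ∑' p, F (e (c, p)) := by
  rw [← (Equiv.ofBijective e he).tsum_eq F]
  have h2 : Summable (fun x => F ((Equiv.ofBijective e he) x)) :=
    (Equiv.ofBijective e he).summable_iff.2 hF
  rw [h2.tsum_prod' hF', tsum_fintype]
  rfl

/-- theta series -/
noncomputable def Th (s w : K) : K := ∑' n, tht s w n

lemma Th_eq {s w : K} (hs0 : s ≠ 0) (hs : ‖s‖ < 1) (hw : w ≠ 0) :
    Th s w = poch (s ^ 2) (s ^ 2) * poch (w * s) (s ^ 2) * poch (s / w) (s ^ 2) :=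
  (jtp hs0 hs hw).tsum_eq

lemma tht_summable {s w : K} (hs0 : s ≠ 0) (hs : ‖s‖ < 1) (hw : w ≠ 0) :
    Summable (tht s w) := (jtp hs0 hs hw).summable

lemma Th_mul {s w w' : K} (hs0 : s ≠ 0) (hs : ‖s‖ < 1) (hw : w ≠ 0) (hw' : w' ≠ 0) :
    HasSum (fun p : ℤ × ℤ => tht s w p.1 * tht s w' p.2) (Th s w * Th s w') :=
  (jtp hs0 hs hw).mul (jtp hs0 hs hw')
    (summable_mul_of_summable_norm (tht_norm_summable hs0 hs hw) (tht_norm_summable hs0 hs hw'))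
    |> fun h => by rw [Th_eq hs0 hs hw, Th_eq hs0 hs hw']; exact h

lemma Th_inv (s w : K) : Th s w⁻¹ = Th s w := by
  unfold Th
  rw [← (Equiv.neg ℤ).tsum_eq (tht s w)]
  congr 1; ext n
  have h : ((-1 : K) ^ n)⁻¹ = (-1) ^ n := by rw [← inv_zpow]; simp
  simp [tht, zpow_neg, h]

lemma Th_shift {s w : K} (hs0 : s ≠ 0) (hw : w ≠ 0) :
    Th s (w * s ^ 2) = - (s * w)⁻¹ * Th s w := by
  unfold Th
  rw [← (Equiv.addRight (1 : ℤ)).tsum_eq (tht s w), ← tsum_mul_left]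
  congr 1; ext n
  simp only [tht, Equiv.coe_addRight]
  rw [mul_zpow, ← zpow_natCast, ← zpow_mul, show (n + 1) ^ 2 = n ^ 2 + ((2 : ℕ) : ℤ) * n + 1 by push_cast; ring,
    zpow_add₀ hs0, zpow_add₀ hs0, zpow_add₀ (by simp), zpow_add₀ hw]
  simp
  field_simp

/-- even part -/
noncomputable def thE (s x : K) : K := ∑' k : ℤ, s ^ (2 * k ^ 2) * x ^ (2 * k)
/-- odd part -/
noncomputable def thO (s x : K) : K := ∑' k : ℤ, s ^ (2 * k ^ 2 + 2 * k) * x ^ (2 * k + 1)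

lemma thE_summable {s x : K} (hs0 : s ≠ 0) (hs : ‖s‖ < 1) (hx : x ≠ 0) :
    Summable (fun k : ℤ => ‖s ^ (2 * k ^ 2) * x ^ (2 * k)‖) := by
  have h := summable_sq_int (r := ‖s‖ ^ 2) (c := ‖x‖ ^ 2)
    (by have := norm_pos_iff.2 hs0; positivity) (pow_lt_one₀ (norm_nonneg _) hs (by simp))
    (by have := norm_pos_iff.2 hx; positivity)
  refine h.congr fun k => ?_
  rw [norm_mul, norm_zpow, norm_zpow, zpow_mul, zpow_mul]
  rfl

lemma thO_summable {s x : K} (hs0 : s ≠ 0) (hs : ‖s‖ < 1) (hx : x ≠ 0) :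
    Summable (fun k : ℤ => ‖s ^ (2 * k ^ 2 + 2 * k) * x ^ (2 * k + 1)‖) := by
  have h := (thE_summable hs0 hs (mul_ne_zero hx hs0)).mul_right ‖x‖
  refine h.congr fun k => ?_
  rw [← norm_mul, mul_zpow, zpow_add₀ hs0, zpow_add₀ hx, zpow_one]
  congr 1; ring

set_option maxHeartbeats 2000000 in
lemma Th_rank2 {s x y : K} (hs0 : s ≠ 0) (hs : ‖s‖ < 1) (hx : x ≠ 0) (hy : y ≠ 0) :
    Th s (x * y) * Th s (x / y) = thE s x * thE s y - s * thO s x * thO s y := by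
  have h := Th_mul hs0 hs (mul_ne_zero hx hy) (div_ne_zero hx hy)
  rw [← h.tsum_eq]
  set e : Fin 2 × (ℤ × ℤ) → ℤ × ℤ := fun p => (p.2.1 + p.2.2 + (p.1 : ℕ), p.2.1 - p.2.2) with he
  have hbij : Function.Bijective e := by
    constructor
    · rintro ⟨c, k, l⟩ ⟨c', k', l'⟩ h
      simp only [he, Prod.mk.injEq] at h ⊢
      have := c.2; have := c'.2
      refine ⟨Fin.ext ?_, ?_, ?_⟩ <;> omega
    · rintro ⟨m, n⟩
      refine ⟨(⟨((m + n) % 2).toNat, by lia⟩, ((m + n) / 2, (m - n) / 2)), ?_⟩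
      simp only [he, Prod.mk.injEq]
      constructor <;> lia
  have hxy : ∀ m n : ℤ, (x * y) ^ m * (x / y) ^ n = x ^ (m + n) * y ^ (m - n) := by
    intro m n
    rw [mul_zpow, div_zpow, zpow_add₀ hx, zpow_sub₀ hy]
    have := zpow_ne_zero n hy
    field_simp
  have hmul : ∀ {a a' b b' c c' A B C D : K}, a * a' = A → b * b' = B → c * c' = C →
      A * B * C = D → a * b * c * (a' * b' * c') = D := by
    rintro a a' b b' c c' A B C D rfl rfl rfl rfl
    ring
  have e0 : ∀ p : ℤ × ℤ, tht s (x * y) (e (0, p)).1 * tht s (x / y) (e (0, p)).2 =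
      (s ^ (2 * p.1 ^ 2) * x ^ (2 * p.1)) * (s ^ (2 * p.2 ^ 2) * y ^ (2 * p.2)) := by
    rintro ⟨k, l⟩
    simp only [he, tht]
    have h1 : ((-1 : K) ^ (k + l + ((0 : Fin 2) : ℕ))) * (-1) ^ (k - l) = 1 := by
      rw [← zpow_add₀ (by simp)]
      apply Even.neg_one_zpow
      simp only [Fin.val_zero]; exact ⟨k, by push_cast; ring⟩
    have h2 : s ^ ((k + l) ^ 2) * s ^ ((k - l) ^ 2) = s ^ (2 * k ^ 2) * s ^ (2 * l ^ 2) := by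
      simp only [← zpow_add₀ hs0]; congr 1; ring
    have h3 := hxy (k + l) (k - l)
    rw [show k + l + (k - l) = 2 * k by ring, show k + l - (k - l) = 2 * l by ring] at h3
    simp only [Fin.val_zero, Nat.cast_zero, add_zero] at h1 ⊢
    exact hmul h1 h2 h3 (by ring)
  have e1 : ∀ p : ℤ × ℤ, tht s (x * y) (e (1, p)).1 * tht s (x / y) (e (1, p)).2 =
      (- s) * ((s ^ (2 * p.1 ^ 2 + 2 * p.1) * x ^ (2 * p.1 + 1)) *
        (s ^ (2 * p.2 ^ 2 + 2 * p.2) * y ^ (2 * p.2 + 1))) := by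
    rintro ⟨k, l⟩
    simp only [he, tht]
    have h1 : ((-1 : K) ^ (k + l + ((1 : Fin 2) : ℕ))) * (-1) ^ (k - l) = -1 := by
      rw [← zpow_add₀ (by simp)]
      apply Odd.neg_one_zpow
      simp only [Fin.val_one]; exact ⟨k, by push_cast; ring⟩
    have h2 : s ^ ((k + l + 1) ^ 2) * s ^ ((k - l) ^ 2) =
        s ^ (2 * k ^ 2 + 2 * k) * s ^ (2 * l ^ 2 + 2 * l) * s ^ (1 : ℤ) := by
      simp only [← zpow_add₀ hs0]; congr 1; ring
    rw [zpow_one] at h2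
    have h3 := hxy (k + l + 1) (k - l)
    rw [show k + l + 1 + (k - l) = 2 * k + 1 by ring,
      show k + l + 1 - (k - l) = 2 * l + 1 by ring] at h3
    simp only [Fin.val_one, Nat.cast_one] at h1 ⊢
    exact hmul h1 h2 h3 (by ring)
  clear_value e
  have hE := summable_mul_of_summable_norm (thE_summable hs0 hs hx) (thE_summable hs0 hs hy)
  have hO := summable_mul_of_summable_norm (thO_summable hs0 hs hx) (thO_summable hs0 hs hy)
  rw [tsum_reindex _ h.summable e hbij]
  · rw [Fin.sum_univ_two]
    simp_rw [e0, e1]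
    rw [tsum_mul_left, ← tsum_mul_tsum_of_summable_norm (thE_summable hs0 hs hx) (thE_summable hs0 hs hy),
      ← tsum_mul_tsum_of_summable_norm (thO_summable hs0 hs hx) (thO_summable hs0 hs hy)]
    unfold thE thO
    ring
  · rw [Fin.forall_fin_two]
    constructor
    · simp_rw [e0]; exact hE
    · simp_rw [e1]; exact hO.mul_left (-s)

lemma thE_shift {s y : K} (hs0 : s ≠ 0) (hy : y ≠ 0) : thE s (y * s) = thO s y / y := by
  unfold thE thO
  rw [← tsum_div_const]
  congr 1; ext k
  rw [mul_zpow, zpow_add₀ hs0, zpow_add₀ hy, zpow_one]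
  field_simp

lemma thO_shift {s y : K} (hs0 : s ≠ 0) (hy : y ≠ 0) : thO s (y * s) = thE s y / (s * y) := by
  unfold thE thO
  rw [← (Equiv.addRight (1 : ℤ)).tsum_eq (fun k : ℤ => s ^ (2 * k ^ 2) * y ^ (2 * k)),
    ← tsum_div_const]
  congr 1; ext k
  simp only [Equiv.coe_addRight]
  rw [mul_zpow]
  have h1 : s ^ (2 * (k + 1) ^ 2) = s ^ (2 * k ^ 2 + 2 * k) * s ^ (2 * k + 1) * s ^ (1 : ℤ) := by
    simp only [← zpow_add₀ hs0]; congr 1; ring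
  have h2 : y ^ (2 * (k + 1)) = y ^ (2 * k + 1) * y ^ (1 : ℤ) := by
    simp only [← zpow_add₀ hy]; congr 1; ring
  rw [h1, h2, zpow_one, zpow_one]
  field_simp

lemma Th_W {s x y : K} (hs0 : s ≠ 0) (hs : ‖s‖ < 1) (hx : x ≠ 0) (hy : y ≠ 0) :
    y * (Th s (x * y * s) * Th s (x / y / s)) = thE s x * thO s y - thO s x * thE s y := by
  have := Th_rank2 hs0 hs hx (mul_ne_zero hy hs0)
  rw [← mul_assoc, ← div_div, thE_shift hs0 hy, thO_shift hs0 hy] at this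
  rw [this]; field_simp

/-- `S Q a` is the theta function with zeros at `a`, in base `Q^10`. -/
noncomputable def SS (Q : K) (a : ℤ) : K := Th (Q ^ (5:ℤ)) (Q ^ (a - 5))

variable {Q : K}

lemma norm5 (h1 : ‖Q‖ < 1) : ‖Q ^ (5:ℤ)‖ < 1 := by
  rw [norm_zpow]; exact pow_lt_one₀ (norm_nonneg _) h1 (by norm_num : 5 ≠ 0)

lemma SS_refl (Q : K) (a : ℤ) : SS Q (10 - a) = SS Q a := by
  unfold SS
  rw [← Th_inv, ← zpow_neg]; congr 2; ring

lemma SS_shift (h0 : Q ≠ 0) (a : ℤ) : SS Q (a + 10) = - Q ^ (-a) * SS Q a := by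
  unfold SS
  have := Th_shift (s := Q ^ (5:ℤ)) (w := Q ^ (a - 5)) (zpow_ne_zero _ h0) (zpow_ne_zero _ h0)
  rw [← zpow_natCast, ← zpow_mul, ← zpow_add₀ h0, ← zpow_add₀ h0] at this
  rw [show a + 10 - 5 = a - 5 + 5 * ((2 : ℕ) : ℤ) by push_cast; ring, this, ← zpow_neg]
  congr 3; ring

lemma SS_W (h0 : Q ≠ 0) (h1 : ‖Q‖ < 1) (A B : ℤ) :
    Q ^ (-A) * (SS Q (A + B) * SS Q (A - B)) =
      -(thE (Q ^ (5:ℤ)) (Q ^ A) * thO (Q ^ (5:ℤ)) (Q ^ B) -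
       thO (Q ^ (5:ℤ)) (Q ^ A) * thE (Q ^ (5:ℤ)) (Q ^ B)) := by
  rw [← Th_W (zpow_ne_zero _ h0) (norm5 h1) (zpow_ne_zero _ h0) (zpow_ne_zero _ h0)]
  have h2 := SS_shift h0 (A + B)
  have h3 : Q ^ A * Q ^ B * Q ^ (5 : ℤ) = Q ^ (A + B + 10 - 5) := by
    rw [← zpow_add₀ h0, ← zpow_add₀ h0]; congr 1; ring
  have h4 : Q ^ A / Q ^ B / Q ^ (5 : ℤ) = Q ^ (A - B - 5) := by
    rw [← zpow_sub₀ h0, ← zpow_sub₀ h0]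
  rw [h3, h4]
  change _ = - (Q ^ B * (SS Q (A + B + 10) * SS Q (A - B)))
  rw [h2, neg_add, zpow_add₀ h0, zpow_neg, zpow_neg]
  have := zpow_ne_zero B h0
  have := zpow_ne_zero A h0
  field_simp

lemma SS_plucker (h0 : Q ≠ 0) (h1 : ‖Q‖ < 1) (A B C D : ℤ) :
    Q ^ (B - C) * (SS Q (A + B) * SS Q (A - B) * (SS Q (C + D) * SS Q (C - D)))
    - SS Q (A + C) * SS Q (A - C) * (SS Q (B + D) * SS Q (B - D))
    + SS Q (A + D) * SS Q (A - D) * (SS Q (B + C) * SS Q (B - C)) = 0 := by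
  have a1 := SS_W h0 h1 A B
  have a2 := SS_W h0 h1 C D
  have a3 := SS_W h0 h1 A C
  have a4 := SS_W h0 h1 B D
  have a5 := SS_W h0 h1 A D
  have a6 := SS_W h0 h1 B C
  have hA := zpow_ne_zero A h0
  have hB := zpow_ne_zero B h0
  have hC := zpow_ne_zero C h0
  have e : ∀ X : ℤ, Q ^ (-X) = (Q ^ X)⁻¹ := fun X => zpow_neg _ _
  rw [e] at a1 a2 a3 a4 a5 a6
  have f : ∀ {p u v : K}, p ≠ 0 → p⁻¹ * u = v → u = p * v := by
    intro p u v hp h; rw [← h]; field_simp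
  rw [f hA a1, f hC a2, f hA a3, f hB a4, f hA a5, f hB a6, zpow_sub₀ h0]
  field_simp
  ring

lemma SS_rels (h0 : Q ≠ 0) (h1 : ‖Q‖ < 1) :
    (SS Q 2 ^ 2 * SS Q 4 ^ 2 = SS Q 5 ^ 2 * SS Q 1 * SS Q 3 + Q * SS Q 1 ^ 2 * SS Q 3 ^ 2) ∧
    (SS Q 2 ^ 2 * SS Q 3 * SS Q 5 = SS Q 1 * SS Q 3 * SS Q 4 ^ 2 + Q * SS Q 1 ^ 2 * SS Q 2 * SS Q 4) ∧
    (SS Q 2 * SS Q 3 ^ 2 * SS Q 4 = SS Q 1 * SS Q 4 ^ 2 * SS Q 5 + Q * SS Q 1 * SS Q 2 ^ 2 * SS Q 3) ∧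
    (SS Q 3 ^ 2 * SS Q 4 ^ 2 = SS Q 2 * SS Q 4 * SS Q 5 ^ 2 + Q ^ 2 * SS Q 1 ^ 2 * SS Q 2 ^ 2) := by
  have p1 := SS_plucker h0 h1 4 3 2 1
  have p2 := SS_plucker h0 h1 4 2 1 0
  have p3 := SS_plucker h0 h1 4 3 2 0
  have p4 := SS_plucker h0 h1 5 3 1 0
  have r6 := SS_refl Q 4
  have r7 := SS_refl Q 3
  have r8 := SS_refl Q 2
  norm_num at p1 p2 p3 p4 r6 r7 r8
  simp only [r6, r7, r8] at p1 p2 p3 p4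
  norm_cast at p1 p2 p3 p4
  refine ⟨?_, ?_, ?_, ?_⟩
  · linear_combination -p1
  · linear_combination -p2
  · linear_combination -p3
  · linear_combination -p4

/-- sum of two squares dissection -/
lemma phi_sq (h0 : Q ≠ 0) (h1 : ‖Q‖ < 1) :
    Th Q 1 ^ 2 = Th (Q ^ (5:ℤ)) 1 ^ 2 -
      4 * Q * Th (Q ^ (5:ℤ)) (Q ^ (4:ℤ)) * Th (Q ^ (5:ℤ)) (Q ^ (2:ℤ)) := by
  have h5 := norm5 h1
  have h50 : Q ^ (5:ℤ) ≠ 0 := zpow_ne_zero _ h0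
  have h := Th_mul h0 h1 (one_ne_zero (α := K)) (one_ne_zero (α := K))
  rw [sq, ← h.tsum_eq]
  set u : Fin 5 → ℤ := ![0, 1, -1, 0, 0] with hu
  set v : Fin 5 → ℤ := ![0, 0, 0, 1, -1] with hv
  set e : Fin 5 × (ℤ × ℤ) → ℤ × ℤ :=
    fun p => (u p.1 + 2 * p.2.1 + p.2.2, v p.1 + 2 * p.2.2 - p.2.1) with he
  have hbij : Function.Bijective e := by
    constructor
    · rintro ⟨c, k, l⟩ ⟨c', k', l'⟩ h
      simp only [he, Prod.mk.injEq] at h ⊢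
      fin_cases c <;> fin_cases c' <;> simp [hu, hv] at h ⊢ <;> lia
    · rintro ⟨m, n⟩
      have : ∃ c : Fin 5, (m - u c + 2 * (n - v c)) % 5 = 0 := by
        have : (m + 2 * n) % 5 = 0 ∨ (m + 2 * n) % 5 = 1 ∨ (m + 2 * n) % 5 = 2 ∨
          (m + 2 * n) % 5 = 3 ∨ (m + 2 * n) % 5 = 4 := by lia
        rcases this with h | h | h | h | h
        · exact ⟨0, by simp [hu, hv]; lia⟩
        · exact ⟨1, by simp [hu, hv]; lia⟩
        · exact ⟨3, by simp [hu, hv]; lia⟩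
        · exact ⟨4, by simp [hu, hv]; lia⟩
        · exact ⟨2, by simp [hu, hv]; lia⟩
      obtain ⟨c, hc⟩ := this
      refine ⟨(c, ((2 * (m - u c) - (n - v c)) / 5, ((m - u c) + 2 * (n - v c)) / 5)), ?_⟩
      simp only [he, Prod.mk.injEq]
      constructor <;> lia
  have gen : ∀ (c : Fin 5) (p : ℤ × ℤ), tht Q 1 (e (c, p)).1 * tht Q 1 (e (c, p)).2 =
      ((-1) ^ (u c + v c) * Q ^ (u c ^ 2 + v c ^ 2)) *
      (tht (Q ^ (5:ℤ)) (Q ^ (4 * u c - 2 * v c)) p.1 *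
        tht (Q ^ (5:ℤ)) (Q ^ (2 * u c + 4 * v c)) p.2) := by
    rintro c ⟨a, b⟩
    simp only [he, tht]
    generalize u c = U
    generalize v c = V
    have h1 : (-1 : K) ^ (U + 2 * a + b) * (-1) ^ (V + 2 * b - a) =
        (-1) ^ (U + V) * (-1) ^ a * (-1) ^ b := by
      rw [← zpow_add₀ (by simp), ← zpow_add₀ (by simp), ← zpow_add₀ (by simp),
        show U + 2 * a + b + (V + 2 * b - a) = U + V + a + b + 2 * b by ring,
        zpow_add₀ (by simp) _ (2 * b), zpow_mul]
      simp
    have h2 : Q ^ ((U + 2 * a + b) ^ 2) * Q ^ ((V + 2 * b - a) ^ 2) =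
        Q ^ (U ^ 2 + V ^ 2) * ((Q ^ (5:ℤ)) ^ (a ^ 2) * (Q ^ (4 * U - 2 * V)) ^ a) *
         ((Q ^ (5:ℤ)) ^ (b ^ 2) * (Q ^ (2 * U + 4 * V)) ^ b) := by
      simp only [← zpow_mul, ← zpow_add₀ h0]
      congr 1; ring
    simp only [one_zpow, mul_one]
    linear_combination (-1 : K) ^ (U + 2 * a + b) * (-1) ^ (V + 2 * b - a) * h2 +
      Q ^ (U ^ 2 + V ^ 2) * ((Q ^ (5:ℤ)) ^ (a ^ 2) * (Q ^ (4 * U - 2 * V)) ^ a) *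
         ((Q ^ (5:ℤ)) ^ (b ^ 2) * (Q ^ (2 * U + 4 * V)) ^ b) * h1
  have hs : ∀ m n : ℤ, HasSum (fun p : ℤ × ℤ => tht (Q ^ (5:ℤ)) (Q ^ m) p.1 *
      tht (Q ^ (5:ℤ)) (Q ^ n) p.2) (Th (Q ^ (5:ℤ)) (Q ^ m) * Th (Q ^ (5:ℤ)) (Q ^ n)) :=
    fun m n => Th_mul h50 h5 (zpow_ne_zero _ h0) (zpow_ne_zero _ h0)
  rw [tsum_reindex _ h.summable e hbij]
  · simp_rw [gen, tsum_mul_left, (hs _ _).tsum_eq]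
    rw [Fin.sum_univ_five]
    simp only [hu, hv, Matrix.cons_val]
    norm_num
    simp only [Th_inv]
    norm_cast
    ring
  · intro c
    simp_rw [gen]
    exact (hs _ _).summable.mul_left _

end

section
variable {K : Type*} [NormedField K] [CompleteSpace K]

lemma poch_one (q : K) : poch 1 q = 0 := by
  apply tprod_of_exists_eq_zero
  exact ⟨0, by simp⟩

lemma poch_succ (x : K) {q : K} (hq : ‖q‖ < 1) : poch x q = (1 - x) * poch (x * q) q := by
  refine tendsto_nhds_unique ((tendsto_add_atTop_iff_nat 1).2 (poch_tendsto x hq)) ?_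
  refine ((poch_tendsto (x * q) hq).const_mul (1 - x)).congr fun n => ?_
  rw [Finset.prod_range_succ']
  simp only [pow_zero, mul_one, pow_succ]
  rw [mul_comm]
  congr 1
  exact Finset.prod_congr rfl fun k _ => by ring

lemma norm_pow_lt {q : K} (hq : ‖q‖ < 1) {n : ℕ} (hn : n ≠ 0) : ‖q ^ n‖ < 1 := by
  rw [norm_pow]; exact pow_lt_one₀ (norm_nonneg _) hq hn

lemma dissect_Th {s z : K} (hs0 : s ≠ 0) (hs : ‖s‖ < 1) (hz : z ^ 5 = 1) :
    Th s (z * s) = (1 - z⁻¹) * Th (s ^ 25) (s ^ 5) - s ^ 2 * (z - (z⁻¹) ^ 2) *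
      Th (s ^ 25) (s ^ 15) := by
  have hz0 : z ≠ 0 := by rintro rfl; simp at hz
  have h := tht_summable hs0 hs (mul_ne_zero hz0 hs0)
  have h25 : s ^ 25 ≠ 0 := pow_ne_zero _ hs0
  have h25' : ‖s ^ 25‖ < 1 := norm_pow_lt hs (by norm_num)
  set u : Fin 5 → ℤ := ![0, -1, 1, -2, 2] with hu
  set v : Fin 5 → ℤ := ![5, -5, 5, -5, 5] with hv
  set e : Fin 5 × ℤ → ℤ := fun p => u p.1 + v p.1 * p.2 with he
  have hbij : Function.Bijective e := by
    constructor
    · rintro ⟨c, k⟩ ⟨c', k'⟩ h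
      simp only [he, Prod.mk.injEq] at h ⊢
      fin_cases c <;> fin_cases c' <;> simp [hu, hv] at h ⊢ <;> lia
    · intro n
      have : n % 5 = 0 ∨ n % 5 = 1 ∨ n % 5 = 2 ∨ n % 5 = 3 ∨ n % 5 = 4 := by lia
      rcases this with h | h | h | h | h
      · exact ⟨(0, n / 5), by simp [he, hu, hv]; lia⟩
      · exact ⟨(2, n / 5), by simp [he, hu, hv]; lia⟩
      · exact ⟨(4, n / 5), by simp [he, hu, hv]; lia⟩
      · exact ⟨(3, -(n + 2) / 5), by simp [he, hu, hv]; lia⟩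
      · exact ⟨(1, -(n + 1) / 5), by simp [he, hu, hv]; lia⟩
  have gen : ∀ (U V t r : ℤ) (j : ℕ) (m : ℤ), V = 5 * t → (t = 1 ∨ t = -1) → 2 * U * V + V = j →
      U ^ 2 + U = r →
      tht s (z * s) (U + V * m) = ((-1) ^ U * s ^ r * z ^ U) * tht (s ^ 25) (s ^ j) m := by
    intro U V t r j m hV ht hj hr
    simp only [tht]
    have h1 : (-1 : K) ^ (U + V * m) = (-1) ^ U * (-1) ^ m := by
      rw [zpow_add₀ (by simp), hV, zpow_mul]
      rcases ht with rfl | rfl <;> norm_num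
    have h2 : (z : K) ^ (U + V * m) = z ^ U := by
      have : z ^ (5 : ℤ) = 1 := by exact_mod_cast hz
      rw [zpow_add₀ hz0, hV, mul_assoc, zpow_mul, this, one_zpow, mul_one]
    have h3 : s ^ ((U + V * m) ^ 2) * s ^ (U + V * m) =
        s ^ r * ((s ^ 25) ^ (m ^ 2) * (s ^ j) ^ m) := by
      rw [← zpow_natCast, ← zpow_natCast]
      simp only [← zpow_mul, ← zpow_add₀ hs0]
      congr 1
      have ht2 : t ^ 2 = 1 := by rcases ht with rfl | rfl <;> norm_num
      rw [← hr, ← hj, hV]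
      push_cast
      linear_combination 25 * m ^ 2 * ht2
    rw [mul_zpow, h1, h2]
    linear_combination (-1) ^ U * (-1) ^ m * z ^ U * h3
  have hsu : ∀ j : ℕ, Summable (tht (s ^ 25) (s ^ j)) := fun j =>
    tht_summable h25 h25' (pow_ne_zero _ hs0)
  have e0 : ∀ m, tht s (z * s) (e (0, m)) = tht (s ^ 25) (s ^ 5) m := fun m => by
    have := gen 0 5 1 0 5 m (by norm_num) (by norm_num) (by norm_num) (by norm_num)
    simpa [he, hu, hv] using this
  have e1 : ∀ m, tht s (z * s) (e (1, m)) = - z⁻¹ * tht (s ^ 25) (s ^ 5) m := fun m => by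
    have := gen (-1) (-5) (-1) 0 5 m (by norm_num) (by norm_num) (by norm_num) (by norm_num)
    simpa [he, hu, hv] using this
  have e2 : ∀ m, tht s (z * s) (e (2, m)) = - s ^ 2 * z * tht (s ^ 25) (s ^ 15) m := fun m => by
    have := gen 1 5 1 2 15 m (by norm_num) (by norm_num) (by norm_num) (by norm_num)
    simp [he, hu, hv] at this ⊢
    rw [this]
  have e3 : ∀ m, tht s (z * s) (e (3, m)) = s ^ 2 * (z⁻¹) ^ 2 * tht (s ^ 25) (s ^ 15) m := fun m => by
    have := gen (-2) (-5) (-1) 2 15 m (by norm_num) (by norm_num) (by norm_num) (by norm_num)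
    have h2 : z ^ (-2 : ℤ) = (z⁻¹) ^ 2 := by rw [zpow_neg, inv_pow]; norm_cast
    have h3 : (-1 : K) ^ (-2 : ℤ) = 1 := by rw [zpow_neg]; norm_num
    rw [h2, h3, one_mul] at this
    simp [he, hu, hv] at this ⊢
    rw [this]
  have e4 : ∀ m, tht s (z * s) (e (4, m)) = s ^ 6 * z ^ 2 * tht (s ^ 25) (s ^ 25) m := fun m => by
    have := gen 2 5 1 6 25 m (by norm_num) (by norm_num) (by norm_num) (by norm_num)
    simp [he, hu, hv] at this ⊢
    rw [this]
  have z4 : Th (s ^ 25) (s ^ 25) = 0 := by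
    rw [Th_eq h25 h25' h25, div_self h25, poch_one, mul_zero]
  clear_value e
  conv_lhs => unfold Th
  rw [tsum_reindex _ h e hbij, Fin.sum_univ_five]
  · simp_rw [e0, e1, e2, e3, e4, tsum_mul_left]
    change Th _ _ + _ * Th _ _ + _ * Th _ _ + _ * Th _ _ + _ * Th _ _ = _
    rw [z4]; ring
  · intro c
    have : c = 0 ∨ c = 1 ∨ c = 2 ∨ c = 3 ∨ c = 4 := by revert c; decide
    rcases this with rfl | rfl | rfl | rfl | rfl
    · simp_rw [e0]; exact hsu 5
    · simp_rw [e1]; exact (hsu 5).mul_left _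
    · simp_rw [e2]; exact (hsu 15).mul_left _
    · simp_rw [e3]; exact (hsu 15).mul_left _
    · simp_rw [e4]; exact (hsu 25).mul_left _

lemma root5_sum {z : K} (hz : z ^ 5 = 1) (hz1 : z ≠ 1) : 1 + z + z ^ 2 + z ^ 3 + z ^ 4 = 0 := by
  have h : (z - 1) * (1 + z + z ^ 2 + z ^ 3 + z ^ 4) = 0 := by linear_combination hz
  exact (mul_eq_zero.1 h).resolve_left (sub_ne_zero.2 hz1)

/-- numerator theta products -/
noncomputable def rA (p : K) : K := poch (p ^ 5) (p ^ 5) * poch (p ^ 3) (p ^ 5) * poch (p ^ 2) (p ^ 5)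
noncomputable def rB (p : K) : K := poch (p ^ 5) (p ^ 5) * poch (p ^ 4) (p ^ 5) * poch p (p ^ 5)

lemma dissect {s z : K} (hs0 : s ≠ 0) (hs : ‖s‖ < 1) (hz : z ^ 5 = 1) (hz1 : z ≠ 1) :
    poch (s ^ 2) (s ^ 2) * poch (z * s ^ 2) (s ^ 2) * poch (z⁻¹ * s ^ 2) (s ^ 2) =
      rA (s ^ 10) + s ^ 2 * (z ^ 2 + (z⁻¹) ^ 2) * rB (s ^ 10) := by
  have hz0 : z ≠ 0 := by rintro rfl; simp at hz
  have hq : ‖s ^ 2‖ < 1 := norm_pow_lt hs (by norm_num)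
  have h25 : s ^ 25 ≠ 0 := pow_ne_zero _ hs0
  have h25' : ‖s ^ 25‖ < 1 := norm_pow_lt hs (by norm_num)
  have h := dissect_Th hs0 hs hz
  rw [Th_eq hs0 hs (mul_ne_zero hz0 hs0), Th_eq h25 h25' (pow_ne_zero _ hs0),
    Th_eq h25 h25' (pow_ne_zero _ hs0), show s / (z * s) = z⁻¹ by field_simp,
    poch_succ z⁻¹ hq, show s ^ 25 / s ^ 5 = s ^ 20 by rw [div_eq_iff (pow_ne_zero _ hs0)]; ring,
    show s ^ 25 / s ^ 15 = s ^ 10 by rw [div_eq_iff (pow_ne_zero _ hs0)]; ring] at h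
  have hA : rA (s ^ 10) = poch ((s ^ 25) ^ 2) ((s ^ 25) ^ 2) * poch (s ^ 5 * s ^ 25) ((s ^ 25) ^ 2) *
      poch (s ^ 20) ((s ^ 25) ^ 2) := by
    unfold rA; simp only [← pow_mul, ← pow_add]
  have hB : rB (s ^ 10) = poch ((s ^ 25) ^ 2) ((s ^ 25) ^ 2) * poch (s ^ 15 * s ^ 25) ((s ^ 25) ^ 2) *
      poch (s ^ 10) ((s ^ 25) ^ 2) := by
    unfold rB; simp only [← pow_mul, ← pow_add]
  rw [← hA, ← hB, show z * s * s = z * s ^ 2 by ring] at h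
  have hne : 1 - z⁻¹ ≠ 0 := by
    rw [sub_ne_zero]; intro h; apply hz1; rw [← inv_inv z, ← h, inv_one]
  have hsum := root5_sum hz hz1
  have key : (z - (z⁻¹) ^ 2) = - (1 - z⁻¹) * (z ^ 2 + (z⁻¹) ^ 2) := by
    have hi : z⁻¹ = z ^ 4 := by
      exact inv_eq_of_mul_eq_one_right (by rw [← hz]; ring)
    rw [hi]
    have h6 : z ^ 6 = z := by linear_combination z * hz
    have h8 : (z ^ 4) ^ 2 = z ^ 3 := by linear_combination z ^ 3 * hz
    rw [h8]
    linear_combination -(z + z^2) * hz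
  rw [key] at h
  apply mul_left_cancel₀ hne
  linear_combination h

lemma prod5 {z : K} (hz : z ^ 5 = 1) (hz1 : z ≠ 1) (A X : K) :
    ∏ j ∈ Finset.range 5, (A - z ^ j * X) = A ^ 5 - X ^ 5 := by
  have hsum := root5_sum hz hz1
  have h1 : (A - z * X) * (A - z ^ 4 * X) = A ^ 2 - (z + z ^ 4) * A * X + X ^ 2 := by
    linear_combination X ^ 2 * hz
  have h2 : (A - z ^ 2 * X) * (A - z ^ 3 * X) = A ^ 2 - (z ^ 2 + z ^ 3) * A * X + X ^ 2 := by
    linear_combination X ^ 2 * hz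
  have h3 : (z + z ^ 4) + (z ^ 2 + z ^ 3) = -1 := by linear_combination hsum
  have h4 : (z + z ^ 4) * (z ^ 2 + z ^ 3) = -1 := by
    linear_combination (z + z ^ 2) * hz + hsum
  simp only [Finset.prod_range_succ, Finset.prod_range_zero, one_mul, pow_zero, pow_one]
  calc _ = (A - X) * (((A - z * X) * (A - z ^ 4 * X)) * ((A - z ^ 2 * X) * (A - z ^ 3 * X))) := by ring
    _ = _ := by
      rw [h1, h2]
      linear_combination (A - X) * A ^ 2 * X ^ 2 * h4 - (A - X) * A * X * (A ^ 2 + X ^ 2) * h3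

lemma norm_root {z : K} (hz : z ^ 5 = 1) : ‖z‖ = 1 := by
  have : ‖z‖ ^ 5 = 1 := by rw [← norm_pow, hz, norm_one]
  exact (pow_eq_one_iff_of_nonneg (norm_nonneg _) (by norm_num)).1 this

/-- product over indices prime to five -/
noncomputable def rD (p : K) : K := ∏ i ∈ Finset.range 4, poch (p ^ (i + 1)) (p ^ 5)

lemma poch_prod5 {z c q : K} (hz : z ^ 5 = 1) (hz1 : z ≠ 1) (hc : c ^ 5 = 1) (hq : ‖q‖ < 1) :
    ∏ j ∈ Finset.range 5, poch (c * (z ^ j * q)) (z ^ j * q) = rD (q ^ 5) * poch (c * q ^ 5) (q ^ 5) ^ 5 := by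
  have hzn : ∀ j, ‖z ^ j * q‖ < 1 := fun j => by
    rw [norm_mul, norm_pow, norm_root hz, one_pow, one_mul]; exact hq
  have hm : ∀ j ∈ Finset.range 5, Multipliable (fun k : ℕ => 1 - c * (z ^ j * q) * (z ^ j * q) ^ k) :=
    fun j _ => poch_mult _ (hzn j)
  have hp : ‖q ^ 5‖ < 1 := norm_pow_lt hq (by norm_num)
  have hp5 : ‖(q ^ 5) ^ 5‖ < 1 := norm_pow_lt hp (by norm_num)
  have e4 : ∀ i < 4, ∀ k : ℕ, ∏ j ∈ Finset.range 5, (1 - c * (z ^ j * q) * (z ^ j * q) ^ (5 * k + i)) =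
      1 - (q ^ 5) ^ (i + 1) * ((q ^ 5) ^ 5) ^ k := by
    intro i hi k
    have hzi : (z ^ (i + 1)) ^ 5 = 1 := by rw [← pow_mul, mul_comm, pow_mul, hz, one_pow]
    have hzi1 : z ^ (i + 1) ≠ 1 := by
      intro h
      apply hz1
      have hcop : Nat.Coprime (i + 1) 5 := by interval_cases i <;> decide
      have := pow_gcd_eq_one.2 ⟨h, hz⟩
      rwa [hcop.gcd_eq_one, pow_one] at this
    have := prod5 hzi hzi1 1 (c * q ^ (5 * k + i + 1))
    have e : (c * q ^ (5 * k + i + 1)) ^ 5 = (q ^ 5) ^ (i + 1) * ((q ^ 5) ^ 5) ^ k := by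
      rw [mul_pow, hc]; ring
    rw [e, one_pow] at this
    rw [← this]
    refine Finset.prod_congr rfl fun j _ => ?_
    have hk : z ^ (j * (5 * k)) = 1 := by
      rw [show j * (5 * k) = 5 * (j * k) by ring, pow_mul, hz, one_pow]
    rw [mul_pow, ← pow_mul, Nat.mul_add, pow_add, hk]
    ring
  have e5 : ∀ k : ℕ, ∏ j ∈ Finset.range 5, (1 - c * (z ^ j * q) * (z ^ j * q) ^ (5 * k + 4)) =
      (1 - c * q ^ 5 * (q ^ 5) ^ k) ^ 5 := by
    intro k
    rw [Finset.prod_congr rfl (g := fun _ => 1 - c * q ^ 5 * (q ^ 5) ^ k)]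
    · simp
    · intro j _
      have hk : (z ^ j) ^ (5 * (k + 1)) = 1 := by
        rw [← pow_mul, show j * (5 * (k + 1)) = 5 * (j * (k + 1)) by ring, pow_mul, hz, one_pow]
      have : c * (z ^ j * q) * (z ^ j * q) ^ (5 * k + 4) = c * (z ^ j) ^ (5 * (k + 1)) * q ^ (5 * (k + 1)) := by
        ring
      rw [this, hk]; ring
  unfold poch
  rw [← Multipliable.tprod_finsetProd hm]
  rw [tprod_group _ 5 (by norm_num) (multipliable_prod hm)]
  · rw [Finset.prod_range_succ]
    congr 1
    · unfold rD poch
      refine Finset.prod_congr rfl fun i hi => ?_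
      simp_rw [e4 i (Finset.mem_range.1 hi)]
    · simp_rw [e5]
      rw [(poch_mult (c * q ^ 5) hp).tprod_pow]
  · intro i hi
    rcases Nat.lt_succ_iff_lt_or_eq.1 (Finset.mem_range.1 hi) with h | rfl
    · simp_rw [e4 i h]; exact poch_mult _ hp5
    · simp_rw [e5]; exact (poch_mult _ hp).pow 5

end

/-- fifth power evaluation over ℂ -/
lemma fifth_power {p z : ℂ} (hp0 : p ≠ 0) (hp : ‖p‖ < 1) (hz : z ^ 5 = 1) (hz1 : z ≠ 1) :
    rD p ^ 3 * poch p p ^ 5 * (poch (z * p) p * poch (z⁻¹ * p) p) ^ 5 =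
      rA p ^ 5 + p * (z ^ 2 + (z⁻¹) ^ 2) ^ 5 * rB p ^ 5 := by
  obtain ⟨q, rfl⟩ : ∃ q : ℂ, q ^ 5 = p := IsAlgClosed.exists_pow_nat_eq p (by norm_num)
  have hq : ‖q‖ < 1 := by
    rw [norm_pow] at hp
    by_contra h
    exact absurd hp (not_lt.2 (one_le_pow₀ (not_lt.1 h)))
  have hq0 : q ≠ 0 := by rintro rfl; simp at hp0
  have hzi : (z⁻¹) ^ 5 = 1 := by rw [inv_pow, hz, inv_one]
  have d1 := poch_prod5 hz hz1 (one_pow 5) hq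
  have d2 := poch_prod5 hz hz1 hz hq
  have d3 := poch_prod5 hz hz1 hzi hq
  have d4 := prod5 hz hz1 (rA (q ^ 5)) (- q * (z ^ 2 + (z⁻¹) ^ 2) * rB (q ^ 5))
  have hj : ∀ j ∈ Finset.range 5, poch (1 * (z ^ j * q)) (z ^ j * q) * poch (z * (z ^ j * q)) (z ^ j * q) *
      poch (z⁻¹ * (z ^ j * q)) (z ^ j * q) =
      rA (q ^ 5) - z ^ j * (- q * (z ^ 2 + (z⁻¹) ^ 2) * rB (q ^ 5)) := by
    intro j _
    obtain ⟨s, hs⟩ : ∃ s : ℂ, s ^ 2 = z ^ j * q := IsAlgClosed.exists_pow_nat_eq _ (by norm_num)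
    have hn : ‖z ^ j * q‖ < 1 := by
      rw [norm_mul, norm_pow, norm_root hz, one_pow, one_mul]; exact hq
    have hz0 : z ≠ 0 := by rintro rfl; simp at hz
    have hs0 : s ≠ 0 := by
      rintro rfl
      have : z ^ j * q ≠ 0 := mul_ne_zero (pow_ne_zero _ hz0) hq0
      rw [← hs] at this; simp at this
    have hs1 : ‖s‖ < 1 := by
      rw [← hs, norm_pow] at hn
      by_contra h
      exact absurd hn (not_lt.2 (one_le_pow₀ (not_lt.1 h)))
    have h10 : s ^ 10 = q ^ 5 := by
      calc s ^ 10 = (s ^ 2) ^ 5 := by ring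
        _ = (z ^ 5) ^ j * q ^ 5 := by rw [hs]; ring
        _ = q ^ 5 := by rw [hz]; ring
    have := dissect hs0 hs1 hz hz1
    rw [h10, hs] at this
    rw [one_mul, this]; ring
  rw [← Finset.prod_congr rfl hj, Finset.prod_mul_distrib, Finset.prod_mul_distrib, d1, d2, d3] at d4
  rw [one_mul] at d4
  linear_combination d4

lemma fifthRoot_pow (t : ℝ) : fifthRoot t ^ 5 = t := by
  unfold fifthRoot
  rw [mul_pow, ← Real.rpow_natCast (|t| ^ ((1:ℝ)/5)), ← Real.rpow_mul (abs_nonneg t)]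
  norm_num
  rcases lt_trichotomy t 0 with h | h | h
  · rw [Real.sign_of_neg h, abs_of_neg h]; ring
  · simp [h]
  · rw [Real.sign_of_pos h, abs_of_pos h]; ring

lemma fifthRoot_sq {t : ℝ} (ht : t ≠ 0) : fifthRoot (t ^ 2) = fifthRoot t ^ 2 := by
  unfold fifthRoot
  have h2 : Real.sign t ^ 2 = 1 := by
    rcases lt_or_gt_of_ne ht with h | h
    · rw [Real.sign_of_neg h]; ring
    · rw [Real.sign_of_pos h]; ring
  rw [mul_pow, h2, Real.sign_of_pos (by positivity), ← Real.rpow_natCast (|t| ^ ((1:ℝ)/5)),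
    ← Real.rpow_mul (abs_nonneg t), abs_pow, ← Real.rpow_natCast (|t|), ← Real.rpow_mul (abs_nonneg t)]
  norm_num

lemma hasProd_inv' {f : ℕ → ℝ} {a : ℝ} (h : HasProd f a) (ha : a ≠ 0) : HasProd (fun n => (f n)⁻¹) a⁻¹ := by
  have := Filter.Tendsto.inv₀ h ha
  unfold HasProd
  refine this.congr fun s => ?_
  simp

lemma RR_prod {t : ℝ} (ht : ‖t‖ < 1) : RR t = fifthRoot t * (poch t (t ^ 5) * poch (t ^ 4) (t ^ 5) /
    (poch (t ^ 2) (t ^ 5) * poch (t ^ 3) (t ^ 5))) := by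
  unfold RR
  congr 1
  have ht5 : ‖t ^ 5‖ < 1 := norm_pow_lt ht (by norm_num)
  have key : ∀ a b : ℕ, a < 5 → b < 5 → a ≠ b →
      HasProd (fun n : ℕ => 1 - if n % 5 = a ∨ n % 5 = b then t ^ (n + 1) else 0)
        (poch (t ^ (a + 1)) (t ^ 5) * poch (t ^ (b + 1)) (t ^ 5)) := by
    intro a b ha hb hab
    have hm : Multipliable (fun n : ℕ => 1 - if n % 5 = a ∨ n % 5 = b then t ^ (n + 1) else 0) := by
      simp only [sub_eq_add_neg]
      apply multipliable_one_add_of_summable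
      refine Summable.of_nonneg_of_le (fun _ => norm_nonneg _) (fun n => ?_)
        ((summable_geometric_of_lt_one (norm_nonneg t) ht).mul_left ‖t‖)
      rw [norm_neg]
      split_ifs
      · rw [norm_pow, pow_succ, mul_comm]
      · rw [norm_zero]; positivity
    have e : ∀ i < 5, ∀ k : ℕ, (1 - if (5 * k + i) % 5 = a ∨ (5 * k + i) % 5 = b then t ^ (5 * k + i + 1) else 0) =
        if i = a ∨ i = b then 1 - t ^ (i + 1) * (t ^ 5) ^ k else 1 := by
      intro i hi k
      rw [show (5 * k + i) % 5 = i by lia]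
      split_ifs <;> ring
    have := tprod_group _ 5 (by norm_num) hm (fun i hi => by
      simp_rw [e i (Finset.mem_range.1 hi)]
      split_ifs
      · exact poch_mult _ ht5
      · exact multipliable_one)
    rw [← hm.hasProd_iff] at this
    convert this using 1
    rw [← Finset.prod_subset (s₁ := {a, b})]
    · rw [Finset.prod_pair hab]
      simp_rw [e a ha, e b hb]
      simp [poch]
    · intro i hi
      simp only [Finset.mem_insert, Finset.mem_singleton] at hi
      rcases hi with rfl | rfl <;> simpa
    · intro i hi hi2
      simp only [Finset.mem_insert, Finset.mem_singleton] at hi2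
      simp_rw [e i (Finset.mem_range.1 hi), if_neg hi2]
      exact tprod_one
  have h1 := key 0 3 (by norm_num) (by norm_num) (by norm_num)
  have h2 := key 1 2 (by norm_num) (by norm_num) (by norm_num)
  have hne : poch (t ^ 2) (t ^ 5) * poch (t ^ 3) (t ^ 5) ≠ 0 :=
    mul_ne_zero (poch_ne_zero' ht5 (norm_pow_lt ht (by norm_num))) (poch_ne_zero' ht5 (norm_pow_lt ht (by norm_num)))
  have h3 := h1.mul (hasProd_inv' h2 hne)
  norm_num at h3
  rw [div_eq_mul_inv, mul_inv, mul_comm (poch (t ^ 2) (t ^ 5))⁻¹]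
  rw [← h3.tprod_eq]
  congr 1; ext n
  have : n % 5 = 0 ∨ n % 5 = 1 ∨ n % 5 = 2 ∨ n % 5 = 3 ∨ n % 5 = 4 := by lia
  unfold legSym5
  rcases this with h | h | h | h | h
  · simp [h, show (n + 1) % 5 = 1 by lia]
  · simp [h, show (n + 1) % 5 = 2 by lia]
  · simp [h, show (n + 1) % 5 = 3 by lia]
  · simp [h, show (n + 1) % 5 = 4 by lia]
  · simp [h, show (n + 1) % 5 = 0 by lia]

/-- bracket products modulo ten -/
noncomputable def br (Q : ℝ) (a : ℕ) : ℝ := poch (Q ^ a) (Q ^ 10) * poch (Q ^ (10 - a)) (Q ^ 10)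


lemma n10 {Q : ℝ} (h0 : Q ≠ 0) (h1 : ‖Q‖ < 1) : ‖Q ^ 10‖ < 1 := norm_pow_lt h1 (by norm_num)

lemma br_ne {Q : ℝ} (h0 : Q ≠ 0) (h1 : ‖Q‖ < 1) {a : ℕ} (ha : 0 < a) (ha' : a < 10) : br Q a ≠ 0 :=
  mul_ne_zero (poch_ne_zero' (n10 h0 h1) (norm_pow_lt h1 (by lia)))
    (poch_ne_zero' (n10 h0 h1) (norm_pow_lt h1 (by lia)))

lemma SS_br {Q : ℝ} (h0 : Q ≠ 0) (h1 : ‖Q‖ < 1) {a : ℕ} (ha' : a < 10) : SS Q a = poch (Q ^ 10) (Q ^ 10) * br Q a := by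
  unfold SS br
  rw [Th_eq (zpow_ne_zero _ h0) (norm5 h1) (zpow_ne_zero _ h0), mul_assoc]
  have e1 : (Q ^ (5:ℤ)) ^ 2 = Q ^ 10 := by norm_cast; ring
  have e2 : Q ^ ((a:ℤ) - 5) * Q ^ (5 : ℤ) = Q ^ a := by
    rw [← zpow_add₀ h0]; simp
  have e3 : Q ^ (5 : ℤ) / Q ^ ((a:ℤ) - 5) = Q ^ (10 - a) := by
    rw [← zpow_sub₀ h0, ← zpow_natCast]; congr 1; lia
  rw [e1, e2, e3]

lemma RR1 {Q : ℝ} (h0 : Q ≠ 0) (h1 : ‖Q‖ < 1) : RR Q = fifthRoot Q * (br Q 1 * br Q 4 / (br Q 2 * br Q 3)) := by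
  rw [RR_prod h1]
  have h5 : ‖Q ^ 5‖ < 1 := norm_pow_lt h1 (by norm_num)
  congr 1
  rw [poch_group Q h5 2 (by norm_num), poch_group (Q ^ 4) h5 2 (by norm_num),
    poch_group (Q ^ 2) h5 2 (by norm_num), poch_group (Q ^ 3) h5 2 (by norm_num)]
  simp only [Finset.prod_range_succ, Finset.prod_range_zero, br, pow_zero, mul_one, one_mul, ← pow_mul,
    ← pow_add, ← pow_succ', pow_one]
  norm_num
  congr 1 <;> ring

lemma RR2 {Q : ℝ} (h0 : Q ≠ 0) (h1 : ‖Q‖ < 1) : RR (Q ^ 2) = fifthRoot Q ^ 2 * (br Q 2 / br Q 4) := by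
  rw [RR_prod (norm_pow_lt h1 (by norm_num)), fifthRoot_sq h0]
  simp only [br, ← pow_mul]

lemma mu_eq {Q : ℝ} (h0 : Q ≠ 0) (h1 : ‖Q‖ < 1) : RR Q * RR (Q ^ 2) ^ 2 = Q * br Q 1 * br Q 2 / (br Q 3 * br Q 4) := by
  rw [RR1 h0 h1, RR2 h0 h1]
  have b1 := br_ne h0 h1 (a := 1) (by norm_num) (by norm_num)
  have b2 := br_ne h0 h1 (a := 2) (by norm_num) (by norm_num)
  have b3 := br_ne h0 h1 (a := 3) (by norm_num) (by norm_num)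
  have b4 := br_ne h0 h1 (a := 4) (by norm_num) (by norm_num)
  have := fifthRoot_pow Q
  field_simp
  linear_combination this

lemma br_rels {Q : ℝ} (h0 : Q ≠ 0) (h1 : ‖Q‖ < 1) :
    (br Q 2 ^ 2 * br Q 4 ^ 2 = br Q 5 ^ 2 * br Q 1 * br Q 3 + Q * br Q 1 ^ 2 * br Q 3 ^ 2) ∧
    (br Q 2 ^ 2 * br Q 3 * br Q 5 = br Q 1 * br Q 3 * br Q 4 ^ 2 + Q * br Q 1 ^ 2 * br Q 2 * br Q 4) ∧
    (br Q 2 * br Q 3 ^ 2 * br Q 4 = br Q 1 * br Q 4 ^ 2 * br Q 5 + Q * br Q 1 * br Q 2 ^ 2 * br Q 3) ∧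
    (br Q 3 ^ 2 * br Q 4 ^ 2 = br Q 2 * br Q 4 * br Q 5 ^ 2 + Q ^ 2 * br Q 1 ^ 2 * br Q 2 ^ 2) := by
  have h := SS_rels h0 h1
  have s1 := SS_br h0 h1 (a := 1) (by norm_num)
  have s2 := SS_br h0 h1 (a := 2) (by norm_num)
  have s3 := SS_br h0 h1 (a := 3) (by norm_num)
  have s4 := SS_br h0 h1 (a := 4) (by norm_num)
  have s5 := SS_br h0 h1 (a := 5) (by norm_num)
  push_cast at s1 s2 s3 s4 s5
  rw [s1, s2, s3, s4, s5] at h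
  have he : poch (Q ^ 10) (Q ^ 10) ≠ 0 := poch_ne_zero' (n10 h0 h1) (n10 h0 h1)
  have he4 := pow_ne_zero 4 he
  obtain ⟨a, b, c, d⟩ := h
  refine ⟨mul_left_cancel₀ he4 ?_, mul_left_cancel₀ he4 ?_, mul_left_cancel₀ he4 ?_, mul_left_cancel₀ he4 ?_⟩
  · linear_combination a
  · linear_combination b
  · linear_combination c
  · linear_combination d

lemma phi_br {Q : ℝ} (h0 : Q ≠ 0) (h1 : ‖Q‖ < 1) : br Q 1 ^ 4 * br Q 2 ^ 2 * br Q 3 ^ 4 * br Q 4 ^ 2 * br Q 5 ^ 2 =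
    br Q 5 ^ 2 - 4 * Q * br Q 1 * br Q 3 := by
  have h := phi_sq h0 h1
  have h2 : ‖Q ^ 2‖ < 1 := norm_pow_lt h1 (by norm_num)
  have s9 := SS_br h0 h1 (a := 9) (by norm_num)
  have s7 := SS_br h0 h1 (a := 7) (by norm_num)
  have s5 := SS_br h0 h1 (a := 5) (by norm_num)
  unfold SS at s9 s7 s5
  norm_num at s9 s7 s5
  have s9' : Th (Q ^ (5:ℤ)) (Q ^ (4 : ℤ)) = poch (Q ^ 10) (Q ^ 10) * br Q 9 := by exact_mod_cast s9
  have s7' : Th (Q ^ (5:ℤ)) (Q ^ (2 : ℤ)) = poch (Q ^ 10) (Q ^ 10) * br Q 7 := by exact_mod_cast s7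
  have s5' : Th (Q ^ (5:ℤ)) 1 = poch (Q ^ 10) (Q ^ 10) * br Q 5 := by exact_mod_cast s5
  have b9 : br Q 9 = br Q 1 := by simp [br, mul_comm]
  have b7 : br Q 7 = br Q 3 := by simp [br, mul_comm]
  rw [s9', s7', s5', b9, b7, Th_eq h0 h1 one_ne_zero, poch_group (Q ^ 2) h2 5 (by norm_num), one_mul, div_one,
    poch_group Q h2 5 (by norm_num)] at h
  simp only [Finset.prod_range_succ, Finset.prod_range_zero, pow_zero, mul_one, one_mul, ← pow_mul,
    ← pow_add, ← pow_succ', pow_one] at h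
  norm_num at h
  have he : poch (Q ^ 10) (Q ^ 10) ≠ 0 := poch_ne_zero' (n10 h0 h1) (n10 h0 h1)
  apply mul_left_cancel₀ (pow_ne_zero 2 he)
  simp only [br] at h ⊢
  norm_num at h
  simp only [Nat.reduceSub, pow_one]
  linear_combination h

lemma chi_br {Q : ℝ} (h0 : Q ≠ 0) (h1 : ‖Q‖ < 1) : poch Q (Q ^ 2) ^ 5 / poch (Q ^ 5) (Q ^ 10) = br Q 1 ^ 5 * br Q 3 ^ 5 * br Q 5 ^ 2 := by
  have h2 : ‖Q ^ 2‖ < 1 := norm_pow_lt h1 (by norm_num)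
  rw [poch_group Q h2 5 (by norm_num)]
  simp only [Finset.prod_range_succ, Finset.prod_range_zero, pow_zero, mul_one, one_mul, ← pow_mul,
    ← pow_add, ← pow_succ', pow_one]
  norm_num
  have he : poch (Q ^ 5) (Q ^ 10) ≠ 0 := poch_ne_zero' (n10 h0 h1) (norm_pow_lt h1 (by norm_num))
  simp only [br]
  norm_num
  field_simp

lemma mu_rels {Q : ℝ} (h0 : Q ≠ 0) (h1 : ‖Q‖ < 1) {k : ℝ} (hk : k = RR Q * RR (Q ^ 2) ^ 2) :
    k ≠ 0 ∧ 1 + k ≠ 0 ∧ 1 - k ≠ 0 ∧ RR Q ^ 5 * (1 + k) ^ 2 = k * (1 - k) ^ 2 ∧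
    RR (Q ^ 2) ^ 5 * (1 - k) = k ^ 2 * (1 + k) ∧
    poch Q (Q ^ 2) ^ 5 / poch (Q ^ 5) (Q ^ 10) * (1 + k - k ^ 2) = 1 - 4 * k - k ^ 2 := by
  have b1 := br_ne h0 h1 (a := 1) (by norm_num) (by norm_num)
  have b2 := br_ne h0 h1 (a := 2) (by norm_num) (by norm_num)
  have b3 := br_ne h0 h1 (a := 3) (by norm_num) (by norm_num)
  have b4 := br_ne h0 h1 (a := 4) (by norm_num) (by norm_num)
  have b5 := br_ne h0 h1 (a := 5) (by norm_num) (by norm_num)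
  obtain ⟨R2, R3, R5, R6⟩ := br_rels h0 h1
  have P := phi_br h0 h1
  have hk' := mu_eq h0 h1
  rw [← hk] at hk'
  have hu := RR1 h0 h1
  have hv := RR2 h0 h1
  have C := chi_br h0 h1
  have hf0 : fifthRoot Q ≠ 0 := by
    intro h; have := fifthRoot_pow Q; rw [h] at this; apply h0; rw [← this]; norm_num
  set u := RR Q
  set v := RR (Q ^ 2)
  set f := fifthRoot Q
  set c1 := br Q 1
  set c2 := br Q 2
  set c3 := br Q 3
  set c4 := br Q 4
  set c5 := br Q 5
  have hk0 : k ≠ 0 := by rw [hk']; positivity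
  have hu0 : u ≠ 0 := by rw [hu]; positivity
  have hv0 : v ≠ 0 := by rw [hv]; positivity
  have g : v * (1 - k) = u ^ 2 * (1 + k) := by
    rw [hv, hu, hk']
    field_simp
    linear_combination c2 ^ 2 * c3 * R5 + c1 * c4 ^ 2 * R3
  have k1 : 1 + k ≠ 0 := by
    intro h
    rw [h, show 1 - k = 2 by linarith] at g
    apply hv0; linarith
  have k2 : 1 - k ≠ 0 := by
    intro h
    rw [h, show 1 + k = 2 by linarith] at g
    apply hu0; apply pow_eq_zero_iff (two_ne_zero) |>.1; linarith
  refine ⟨hk0, k1, k2, ?_, ?_, ?_⟩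
  · have : u ^ 4 * (1 + k) ^ 2 = v ^ 2 * (1 - k) ^ 2 := by
      rw [← mul_pow, g]; ring
    linear_combination u * this - (1 - k) ^ 2 * hk
  · linear_combination v ^ 4 * g - (1 + k) * (k + u * v ^ 2) * hk
  · rw [C]
    have hc : Q * c1 * c3 * (1 - k ^ 2) = k * c5 ^ 2 := by
      rw [hk']; field_simp
      linear_combination R6
    have h3 : c1 ^ 5 * c3 ^ 5 * c5 ^ 2 * (c5 ^ 2 + Q * c1 * c3) = c5 ^ 2 - 4 * Q * c1 * c3 := by
      linear_combination P - c1 ^ 4 * c3 ^ 4 * c5 ^ 2 * R2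
    apply mul_left_cancel₀ (pow_ne_zero 2 b5)
    linear_combination (1 - k ^ 2) * h3 + (-c1 ^ 5 * c3 ^ 5 * c5 ^ 2  - 4) * hc

/-- golden-ratio constants -/
noncomputable def al : ℝ := (Real.sqrt 5 - 1) / 2
noncomputable def be : ℝ := -(Real.sqrt 5 + 1) / 2

lemma s5 : Real.sqrt 5 ^ 2 = 5 := Real.sq_sqrt (by norm_num)

lemma al_sq : al ^ 2 = 1 - al := by unfold al; linear_combination s5 / 4
lemma be_sq : be ^ 2 = 1 - be := by unfold be; linear_combination s5 / 4
lemma al_add : al + be = -1 := by unfold al be; ring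
lemma al5 : al ^ 5 = (5 * Real.sqrt 5 - 11) / 2 := by
  have : al ^ 5 = 5 * al - 3 := by
    linear_combination (al ^ 3 - al ^ 2 + 2 * al - 3) * al_sq
  rw [this]; unfold al; ring
lemma be5 : be ^ 5 = -(5 * Real.sqrt 5 + 11) / 2 := by
  have : be ^ 5 = 5 * be - 3 := by
    linear_combination (be ^ 3 - be ^ 2 + 2 * be - 3) * be_sq
  rw [this]; unfold be; ring

lemma exists_zeta : ∃ z : ℂ, z ^ 5 = 1 ∧ z ≠ 1 ∧ z + z⁻¹ = (al : ℂ) ∧ z ^ 2 + (z⁻¹) ^ 2 = (be : ℂ) := by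
  obtain ⟨d, hd⟩ : ∃ d : ℂ, d ^ 2 = (al : ℂ) ^ 2 - 4 := IsAlgClosed.exists_pow_nat_eq _ (by norm_num)
  have ha : (al : ℂ) ^ 2 = 1 - al := by exact_mod_cast al_sq
  have hab : (al : ℂ) + be = -1 := by exact_mod_cast al_add
  set z : ℂ := (al + d) / 2 with hz
  have h1 : z ^ 2 + 1 = al * z := by rw [hz]; linear_combination hd / 4
  have h4 : 1 + z + z ^ 2 + z ^ 3 + z ^ 4 = 0 := by
    linear_combination (z ^ 2 + 1 + al * z + z) * h1 + z ^ 2 * ha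
  have h5 : z ^ 5 = 1 := by linear_combination (z - 1) * h4
  have hz0 : z ≠ 0 := by rintro h; rw [h] at h5; norm_num at h5
  have h2 : z + z⁻¹ = (al : ℂ) := by field_simp; linear_combination h1
  have hzi : z * z⁻¹ = 1 := mul_inv_cancel₀ hz0
  refine ⟨z, h5, ?_, h2, ?_⟩
  · rintro h; rw [h] at h4; norm_num at h4
  · linear_combination (z + z⁻¹ + al) * h2 - 2 * hzi + ha - hab

/-- real quadratic product -/
noncomputable def WW (a Q : ℝ) : ℝ := ∏' k : ℕ, (1 - a * Q ^ (2 * k + 1) + (Q ^ (2 * k + 1)) ^ 2)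

lemma WW_mult (a : ℝ) {Q : ℝ} (hQ : ‖Q‖ < 1) :
    Multipliable (fun k : ℕ => 1 - a * Q ^ (2 * k + 1) + (Q ^ (2 * k + 1)) ^ 2) := by
  have h2 : ‖Q ^ 2‖ < 1 := norm_pow_lt hQ (by norm_num)
  have : ∀ k : ℕ, 1 - a * Q ^ (2 * k + 1) + (Q ^ (2 * k + 1)) ^ 2 = 1 + (- a * Q ^ (2 * k + 1) + (Q ^ (2 * k + 1)) ^ 2) :=
    fun k => by ring
  simp_rw [this]
  apply multipliable_one_add_of_summable
  refine Summable.of_nonneg_of_le (fun _ => norm_nonneg _) (fun k => ?_)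
        ((summable_geometric_of_lt_one (norm_nonneg _) h2).mul_left (‖a‖ + 1))
  have e : ‖Q ^ (2 * k + 1)‖ ≤ ‖Q ^ 2‖ ^ k := by
    rw [← norm_pow, ← pow_mul, norm_pow, norm_pow]
    exact pow_le_pow_of_le_one (norm_nonneg _) hQ.le (by lia)
  have e1 : ‖Q ^ (2 * k + 1)‖ ≤ 1 := by
    rw [norm_pow]; exact pow_le_one₀ (norm_nonneg _) hQ.le
  refine (norm_add_le _ _).trans ?_
  rw [norm_mul, norm_neg, norm_pow (Q ^ _)]
  have : ‖Q ^ (2 * k + 1)‖ ^ 2 ≤ ‖Q ^ (2 * k + 1)‖ := by nlinarith [norm_nonneg (Q ^ (2 * k + 1))]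
  nlinarith [norm_nonneg a]

lemma WW_cast {a : ℝ} {z : ℂ} (hz0 : z ≠ 0) (hz : z + z⁻¹ = a) {Q : ℝ} (hQ : ‖Q‖ < 1) :
    ((WW a Q : ℝ) : ℂ) = poch (z * Q) ((Q : ℂ) ^ 2) * poch (z⁻¹ * Q) ((Q : ℂ) ^ 2) := by
  have hQ' : ‖(Q : ℂ) ^ 2‖ < 1 := norm_pow_lt (by simpa using hQ) (by norm_num)
  have := (WW_mult a hQ).map_tprod Complex.ofRealHom Complex.continuous_ofReal
  simp only [Complex.ofRealHom_eq_coe] at this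
  unfold WW
  rw [this]
  unfold poch
  rw [← (poch_mult (z * Q) hQ').tprod_mul (poch_mult (z⁻¹ * Q) hQ')]
  congr 1; ext k
  push_cast
  rw [← hz]
  have hzi : z * z⁻¹ = 1 := mul_inv_cancel₀ hz0
  linear_combination -((Q:ℂ) ^ (2 * k + 1)) ^ 2 * hzi

lemma poch_cast {a Q : ℝ} (hQ : ‖Q‖ < 1) : ((poch a Q : ℝ) : ℂ) = poch (a : ℂ) (Q : ℂ) := by
  have := (poch_mult a hQ).map_tprod Complex.ofRealHom Complex.continuous_ofReal
  simp only [Complex.ofRealHom_eq_coe] at this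
  unfold poch
  rw [this]
  push_cast
  rfl

lemma XY {p : ℝ} (hp0 : p ≠ 0) (hp : ‖p‖ < 1) {z : ℂ} (hz : z ^ 5 = 1) (hz1 : z ≠ 1) {b : ℝ}
    (hb : z ^ 2 + (z⁻¹) ^ 2 = b) :
    ∃ c : ℂ, c ≠ 0 ∧ c = (rD (p : ℂ) ^ 3 * poch (p : ℂ) p ^ 5) / rA (p : ℂ) ^ 5 ∧
      c * (poch (z * p) (p : ℂ) * poch (z⁻¹ * p) (p : ℂ)) ^ 5 = ((1 + b ^ 5 * RR p ^ 5 : ℝ) : ℂ) ∧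
      (poch (z * p) (p : ℂ) * poch (z⁻¹ * p) (p : ℂ)) ^ 5 ≠ 0 := by
  have hpc : ‖(p : ℂ)‖ < 1 := by simpa using hp
  have hp5 : ‖p ^ 5‖ < 1 := norm_pow_lt hp (by norm_num)
  have hpc5 : ‖(p : ℂ) ^ 5‖ < 1 := norm_pow_lt hpc (by norm_num)
  have h := fifth_power (by exact_mod_cast hp0 : (p : ℂ) ≠ 0) hpc hz hz1
  rw [hb] at h
  have nz : ∀ i : ℕ, i ≠ 0 → poch ((p : ℂ) ^ i) ((p : ℂ) ^ 5) ≠ 0 := fun i hi =>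
    poch_ne_zero' hpc5 (norm_pow_lt hpc hi)
  have hA0 : rA (p : ℂ) ≠ 0 := by
    unfold rA; exact mul_ne_zero (mul_ne_zero (nz _ (by norm_num)) (nz _ (by norm_num))) (nz _ (by norm_num))
  have hD0 : rD (p : ℂ) ≠ 0 := by
    unfold rD; exact Finset.prod_ne_zero_iff.2 fun i _ => nz _ (by lia)
  have hP0 : poch (p : ℂ) p ≠ 0 := poch_ne_zero' hpc hpc
  have hR : ((RR p ^ 5 : ℝ) : ℂ) = p * rB (p : ℂ) ^ 5 / rA (p : ℂ) ^ 5 := by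
    rw [RR_prod hp, mul_pow, fifthRoot_pow]
    unfold rA rB
    push_cast [poch_cast hp5]
    have a1 := nz 1 (by norm_num)
    have a2 := nz 2 (by norm_num)
    have a3 := nz 3 (by norm_num)
    have a4 := nz 4 (by norm_num)
    have a5 := nz 5 (by norm_num)
    rw [pow_one] at a1
    field_simp
  have hnz : ‖z‖ = 1 := norm_root hz
  refine ⟨_, ?_, rfl, ?_, ?_⟩
  · exact div_ne_zero (mul_ne_zero (pow_ne_zero _ hD0) (pow_ne_zero _ hP0)) (pow_ne_zero _ hA0)
  · push_cast at hR ⊢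
    rw [hR]
    generalize poch (z⁻¹ * (p : ℂ)) (p : ℂ) = y at *
    field_simp
    linear_combination h
  · apply pow_ne_zero
    apply mul_ne_zero
    · exact poch_ne_zero' hpc (by rw [norm_mul, hnz, one_mul]; exact hpc)
    · exact poch_ne_zero' hpc (by rw [norm_mul, norm_inv, hnz, inv_one, one_mul]; exact hpc)

lemma X_split {Q : ℝ} (hQ : ‖Q‖ < 1) (z : ℂ) :
    poch (z * Q) (Q : ℂ) = poch (z * Q) ((Q : ℂ) ^ 2) * poch (z * ((Q ^ 2 : ℝ) : ℂ)) ((Q ^ 2 : ℝ) : ℂ) := by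
  have hpc : ‖(Q : ℂ)‖ < 1 := by simpa using hQ
  rw [poch_group (z * Q) hpc 2 (by norm_num)]
  simp only [Finset.prod_range_succ, Finset.prod_range_zero, pow_zero, mul_one, one_mul, pow_one]
  push_cast
  congr 2; ring

lemma WW_rel {Q : ℝ} (h0 : Q ≠ 0) (hQ : ‖Q‖ < 1) :
    WW al Q ≠ 0 ∧ WW be Q ≠ 0 ∧ 1 + al ^ 5 * RR Q ^ 5 ≠ 0 ∧ 1 + be ^ 5 * RR Q ^ 5 ≠ 0 ∧
    1 + al ^ 5 * RR (Q ^ 2) ^ 5 ≠ 0 ∧ 1 + be ^ 5 * RR (Q ^ 2) ^ 5 ≠ 0 ∧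
    WW al Q ^ 5 * ((1 + al ^ 5 * RR Q ^ 5) * (1 + be ^ 5 * RR (Q ^ 2) ^ 5)) =
    WW be Q ^ 5 * ((1 + be ^ 5 * RR Q ^ 5) * (1 + al ^ 5 * RR (Q ^ 2) ^ 5)) := by
  obtain ⟨z, hz, hz1, ha, hb⟩ := exists_zeta
  have hz0 : z ≠ 0 := by rintro rfl; simp at hz
  have hw : (z ^ 2) ^ 5 = 1 := by rw [← pow_mul, mul_comm, pow_mul, hz, one_pow]
  have hw1 : z ^ 2 ≠ 1 := by
    intro h; apply hz1; linear_combination hz - (z ^ 3 + z) * h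
  have hwa : (z ^ 2) ^ 2 + ((z ^ 2)⁻¹) ^ 2 = (al : ℂ) := by
    rw [← ha]
    have hi : z⁻¹ = z ^ 4 := by
      exact inv_eq_of_mul_eq_one_right (by rw [← hz]; ring)
    rw [← inv_pow z 2, hi]
    linear_combination (z ^ 11 + z ^ 6 + z) * hz
  have hwb : z ^ 2 + (z ^ 2)⁻¹ = (be : ℂ) := by rw [inv_pow] at hb; exact hb
  have hQ2 : ‖Q ^ 2‖ < 1 := norm_pow_lt hQ (by norm_num)
  obtain ⟨c1, c10, e1, x1, n1⟩ := XY h0 hQ hz hz1 hb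
  obtain ⟨c1', c10', e1', y1, m1⟩ := XY h0 hQ hw hw1 hwa
  obtain ⟨c2, c20, e2, x2, n2⟩ := XY (pow_ne_zero 2 h0) hQ2 hz hz1 hb
  obtain ⟨c2', c20', e2', y2, m2⟩ := XY (pow_ne_zero 2 h0) hQ2 hw hw1 hwa
  rw [← e1] at e1'; subst e1'
  rw [← e2] at e2'; subst e2'
  have hWa := WW_cast hz0 ha hQ
  have hWb := WW_cast (pow_ne_zero 2 hz0) hwb hQ
  have q1 := X_split hQ z
  have q2 := X_split hQ z⁻¹
  have q3 := X_split hQ (z ^ 2)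
  have q4 := X_split hQ (z ^ 2)⁻¹
  have Xs : poch (z * Q) (Q : ℂ) * poch (z⁻¹ * Q) (Q : ℂ) = WW al Q *
      (poch (z * ((Q ^ 2 : ℝ) : ℂ)) ((Q ^ 2 : ℝ) : ℂ) * poch (z⁻¹ * ((Q ^ 2 : ℝ) : ℂ)) ((Q ^ 2 : ℝ) : ℂ)) := by
    rw [q1, q2, hWa]; ring
  have Ys : poch (z ^ 2 * Q) (Q : ℂ) * poch ((z ^ 2)⁻¹ * Q) (Q : ℂ) = WW be Q *
      (poch (z ^ 2 * ((Q ^ 2 : ℝ) : ℂ)) ((Q ^ 2 : ℝ) : ℂ) * poch ((z ^ 2)⁻¹ * ((Q ^ 2 : ℝ) : ℂ)) ((Q ^ 2 : ℝ) : ℂ)) := by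
    rw [q3, q4, hWb]; ring
  rw [Xs, mul_pow] at x1 n1
  rw [Ys, mul_pow] at y1 m1
  set X := (poch (z * ((Q ^ 2 : ℝ) : ℂ)) ((Q ^ 2 : ℝ) : ℂ) * poch (z⁻¹ * ((Q ^ 2 : ℝ) : ℂ)) ((Q ^ 2 : ℝ) : ℂ)) ^ 5
  set Y := (poch (z ^ 2 * ((Q ^ 2 : ℝ) : ℂ)) ((Q ^ 2 : ℝ) : ℂ) * poch ((z ^ 2)⁻¹ * ((Q ^ 2 : ℝ) : ℂ)) ((Q ^ 2 : ℝ) : ℂ)) ^ 5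
  refine ⟨?_, ?_, ?_, ?_, ?_, ?_, ?_⟩
  · intro h; apply n1; rw [h]; simp
  · intro h; apply m1; rw [h]; simp
  · intro h; rw [h] at y1; exact mul_ne_zero c10 m1 (by simpa using y1)
  · intro h; rw [h] at x1; exact mul_ne_zero c10 n1 (by simpa using x1)
  · intro h; rw [h] at y2; exact mul_ne_zero c20 m2 (by simpa using y2)
  · intro h; rw [h] at x2; exact mul_ne_zero c20 n2 (by simpa using x2)
  · rw [← Complex.ofReal_inj, Complex.ofReal_mul, Complex.ofReal_mul, Complex.ofReal_mul, Complex.ofReal_mul,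
      ← x1, ← x2, ← y1, ← y2]
    push_cast
    ring

/-- Final product evaluation. -/
lemma products_eval {Q : ℝ} (h0 : Q ≠ 0) (hQ : ‖Q‖ < 1) {k : ℝ} (hk : k = RR Q * RR (Q ^ 2) ^ 2) :
    poch Q (Q ^ 2) ^ 5 / poch (Q ^ 5) (Q ^ 10) = (1 - 4 * k - k ^ 2) / (1 + k - k ^ 2) ∧
    (WW al Q / WW be Q) ^ 5 =
      (2 - k + 18 * k ^ 2 + k ^ 3 + 2 * k ^ 4 - 5 * Real.sqrt 5 * (k + k ^ 3)) /
      (2 - k + 18 * k ^ 2 + k ^ 3 + 2 * k ^ 4 + 5 * Real.sqrt 5 * (k + k ^ 3)) := by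
  obtain ⟨hk0, k1, k2, hu, hv, hA⟩ := mu_rels h0 hQ hk
  obtain ⟨wa, wb, n1, n2, n3, n4, hB⟩ := WW_rel h0 hQ
  have hd : 1 + k - k ^ 2 ≠ 0 := by
    intro h
    rw [h, mul_zero] at hA
    apply hk0; linarith
  constructor
  · rw [eq_div_iff hd, hA]
  · have f1 : (1 + al ^ 5 * RR Q ^ 5) * (1 + k) ^ 2 = (1 + k) ^ 2 + al ^ 5 * (k * (1 - k) ^ 2) := by
      rw [← hu]; ring
    have f2 : (1 + be ^ 5 * RR Q ^ 5) * (1 + k) ^ 2 = (1 + k) ^ 2 + be ^ 5 * (k * (1 - k) ^ 2) := by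
      rw [← hu]; ring
    have f3 : (1 + al ^ 5 * RR (Q ^ 2) ^ 5) * (1 - k) = (1 - k) + al ^ 5 * (k ^ 2 * (1 + k)) := by
      rw [← hv]; ring
    have f4 : (1 + be ^ 5 * RR (Q ^ 2) ^ 5) * (1 - k) = (1 - k) + be ^ 5 * (k ^ 2 * (1 + k)) := by
      rw [← hv]; ring
    have g1 : ((1 + al ^ 5 * RR Q ^ 5) * (1 + be ^ 5 * RR (Q ^ 2) ^ 5)) * ((1 + k) ^ 2 * (1 - k)) =
        (1 - 4 * k - k ^ 2) * (2 - k + 18 * k ^ 2 + k ^ 3 + 2 * k ^ 4 + 5 * Real.sqrt 5 * (k + k ^ 3)) / 2 := by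
      calc _ = ((1 + al ^ 5 * RR Q ^ 5) * (1 + k) ^ 2) * ((1 + be ^ 5 * RR (Q ^ 2) ^ 5) * (1 - k)) := by ring
        _ = _ := by
          rw [f1, f4, al5, be5]
          have := s5
          generalize Real.sqrt 5 = s at *
          linear_combination (-25 / 4 * k ^ 3 * (1 - k) ^ 2 * (1 + k)) * this
    have g2 : ((1 + be ^ 5 * RR Q ^ 5) * (1 + al ^ 5 * RR (Q ^ 2) ^ 5)) * ((1 + k) ^ 2 * (1 - k)) =
        (1 - 4 * k - k ^ 2) * (2 - k + 18 * k ^ 2 + k ^ 3 + 2 * k ^ 4 - 5 * Real.sqrt 5 * (k + k ^ 3)) / 2 := by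
      calc _ = ((1 + be ^ 5 * RR Q ^ 5) * (1 + k) ^ 2) * ((1 + al ^ 5 * RR (Q ^ 2) ^ 5) * (1 - k)) := by ring
        _ = _ := by
          rw [f2, f3, al5, be5]
          have := s5
          generalize Real.sqrt 5 = s at *
          linear_combination (-25 / 4 * k ^ 3 * (1 - k) ^ 2 * (1 + k)) * this
    have hm : (1 + k) ^ 2 * (1 - k) ≠ 0 := mul_ne_zero (pow_ne_zero _ k1) k2
    have L : ((1 + al ^ 5 * RR Q ^ 5) * (1 + be ^ 5 * RR (Q ^ 2) ^ 5)) * ((1 + k) ^ 2 * (1 - k)) ≠ 0 :=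
      mul_ne_zero (mul_ne_zero n1 n4) hm
    rw [g1] at L
    have hN : (2 - k + 18 * k ^ 2 + k ^ 3 + 2 * k ^ 4 + 5 * Real.sqrt 5 * (k + k ^ 3)) ≠ 0 := by
      intro h; apply L; rw [h]; ring
    have hM : (1 - 4 * k - k ^ 2) ≠ 0 := by
      intro h; apply L; rw [h]; ring
    rw [div_pow, div_eq_div_iff (pow_ne_zero _ wb) hN]
    apply mul_left_cancel₀ hM
    linear_combination 2 * ((1 + k) ^ 2 * (1 - k)) * hB - 2 * WW al Q ^ 5 * g1 + 2 * WW be Q ^ 5 * g2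

lemma hs_congr {ι K : Type*} [NormedField K] {f g : ι → K} {a b : K} (h : HasSum f a)
    (hfg : ∀ n, g n = f n) (hab : b = a) : HasSum g b := by
  rw [funext hfg, hab]; exact h

lemma hasSum_coth_nat {y : ℝ} (hy : y ≠ 0) :
    HasSum (fun n : ℕ => 1 / (y ^ 2 + ((n : ℝ) + 1) ^ 2))
      ((Real.pi * (Real.cosh (Real.pi * y) / Real.sinh (Real.pi * y)) - 1 / y) / (2 * y)) := by
  have hz : (y : ℂ) * Complex.I ∈ Complex.integerComplement := by
    rintro ⟨n, hn⟩
    have := congrArg Complex.im hn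
    simp at this
    exact hy this.symm
  have h1 := cot_series_rep' hz
  have h2 := (summable_cotTerm hz).hasSum
  have h3 : (∑' n, cotTerm ((y : ℂ) * Complex.I) n) = Real.pi * Complex.cot (Real.pi * (y * Complex.I)) - 1 / (y * Complex.I) := by
    rw [h1]
  rw [h3] at h2
  have hI := Complex.I_sq
  have hy' : (y : ℂ) ≠ 0 := by exact_mod_cast hy
  have hs : Real.sinh (Real.pi * y) ≠ 0 := by
    rw [Ne, Real.sinh_eq_zero]; exact mul_ne_zero Real.pi_ne_zero hy
  have hs' : Complex.sinh (Real.pi * y) ≠ 0 := by exact_mod_cast hs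
  have h4 := h2.mul_left (-1 / (2 * y * Complex.I))
  rw [← Complex.hasSum_ofReal]
  refine hs_congr h4 (fun n => ?_) ?_
  · have p : (0:ℝ) < y ^ 2 + ((n : ℝ) + 1) ^ 2 := by positivity
    have p' : (y:ℂ) ^ 2 + ((n : ℂ) + 1) ^ 2 ≠ 0 := by exact_mod_cast p.ne'
    have e : ((y:ℂ) * Complex.I - (n + 1)) * (y * Complex.I + (n + 1)) = -((y:ℂ) ^ 2 + ((n : ℂ) + 1) ^ 2) := by
      linear_combination (y:ℂ) ^ 2 * hI
    have e1 : ((y:ℂ) * Complex.I - (n + 1)) ≠ 0 := by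
      intro h; rw [h, zero_mul] at e; exact p' (by linear_combination e)
    have e2 : ((y:ℂ) * Complex.I + (n + 1)) ≠ 0 := by
      intro h; rw [h, mul_zero] at e; exact p' (by linear_combination e)
    have hI0 := Complex.I_ne_zero
    push_cast
    unfold cotTerm
    rw [div_add_div _ _ e1 e2, e]
    field_simp
    ring
  · rw [Complex.cot, ← mul_assoc, Complex.sin_mul_I, Complex.cos_mul_I]
    push_cast
    have hI0 := Complex.I_ne_zero
    field_simp
    linear_combination (Real.pi * y * Complex.cosh (Real.pi * y) -Complex.sinh (Real.pi * y)) * hI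

lemma hasSum_coth {y : ℝ} (hy : y ≠ 0) :
    HasSum (fun m : ℤ => 1 / ((m : ℝ) ^ 2 + y ^ 2))
      (Real.pi / y * (Real.cosh (Real.pi * y) / Real.sinh (Real.pi * y))) := by
  have h := hasSum_coth_nat hy
  have h0 : HasSum (fun n : ℕ => 1 / (((n : ℤ) : ℝ) ^ 2 + y ^ 2))
      ((Real.pi * (Real.cosh (Real.pi * y) / Real.sinh (Real.pi * y)) - 1 / y) / (2 * y) + 1 / y ^ 2) := by
    have := (hasSum_nat_add_iff (f := fun n : ℕ => 1 / (((n : ℤ) : ℝ) ^ 2 + y ^ 2)) 1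
      (g := ((Real.pi * (Real.cosh (Real.pi * y) / Real.sinh (Real.pi * y)) - 1 / y) / (2 * y)))).1
      (hs_congr h (fun n => by push_cast; ring) rfl)
    simpa using this
  have h1 : HasSum (fun n : ℕ => 1 / (((-((n : ℤ) + 1) : ℤ) : ℝ) ^ 2 + y ^ 2))
      ((Real.pi * (Real.cosh (Real.pi * y) / Real.sinh (Real.pi * y)) - 1 / y) / (2 * y)) := by
    exact hs_congr h (fun n => by push_cast; ring) rfl
  have := HasSum.of_nat_of_neg_add_one (f := fun m : ℤ => 1 / ((m : ℝ) ^ 2 + y ^ 2)) h0 h1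
  refine hs_congr this (fun _ => rfl) ?_
  generalize Real.cosh (Real.pi * y) / Real.sinh (Real.pi * y) = c
  field_simp
  ring

lemma hasSum_alt {y : ℝ} (hy : y ≠ 0) :
    HasSum (fun m : ℤ => (-1 : ℝ) ^ m / ((m : ℝ) ^ 2 + y ^ 2)) (Real.pi / (y * Real.sinh (Real.pi * y))) := by
  have h1 := hasSum_coth hy
  have h2 := (hasSum_coth (div_ne_zero hy two_ne_zero : y / 2 ≠ 0)).mul_left (1 / 4)
  have hinj : Function.Injective (fun m : ℤ => 2 * m) := fun a b h => by simpa using h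
  have h3 : HasSum (fun m : ℤ => if Even m then 1 / ((m : ℝ) ^ 2 + y ^ 2) else 0)
      (1 / 4 * (Real.pi / (y / 2) * (Real.cosh (Real.pi * (y / 2)) / Real.sinh (Real.pi * (y / 2))))) := by
    rw [← hinj.hasSum_iff]
    · refine hs_congr h2 (fun m => ?_) rfl
      simp only [Function.comp, even_two, Even.mul_right, if_true]
      push_cast
      have : (0:ℝ) < m ^ 2 + (y / 2) ^ 2 := by positivity
      have : (0:ℝ) < (2 * m) ^ 2 + y ^ 2 := by positivity
      field_simp
      ring
    · intro m hm
      rw [if_neg]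
      rintro ⟨k, hk⟩
      exact hm ⟨k, by simp only; lia⟩
  have h4 := (h3.mul_left 2).sub h1
  have hs : Real.sinh (Real.pi * (y / 2)) ≠ 0 := by
    rw [Ne, Real.sinh_eq_zero]; exact mul_ne_zero Real.pi_ne_zero (div_ne_zero hy two_ne_zero)
  have hc : Real.cosh (Real.pi * (y / 2)) ≠ 0 := (Real.cosh_pos _).ne'
  refine hs_congr h4 (fun m => ?_) ?_
  · split_ifs with h
    · rw [h.neg_one_zpow]; ring
    · rw [(Int.not_even_iff_odd.1 h).neg_one_zpow]; ring
  · rw [show Real.pi * y = 2 * (Real.pi * (y / 2)) by ring, Real.sinh_two_mul, Real.cosh_two_mul]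
    have := Real.cosh_sq (Real.pi * (y / 2))
    generalize Real.sinh (Real.pi * (y / 2)) = s at *
    generalize Real.cosh (Real.pi * (y / 2)) = c at *
    field_simp
    linear_combination -4 * this

lemma inner_sum_eval {x a : ℝ} (hx : 0 < x) (ha : a ≠ 0) (n : ℤ) :
    ∑' m : ℤ, (-1 : ℝ) ^ (m + n) / ((x * m) ^ 2 + a ^ 2) =
      (-1) ^ n * (Real.pi / (x * (a * Real.sinh (Real.pi * a / x)))) := by
  have h := (hasSum_alt (div_ne_zero ha hx.ne' : a / x ≠ 0)).mul_left ((-1) ^ n / x ^ 2)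
  have h2 : (fun m : ℤ => (-1 : ℝ) ^ (m + n) / ((x * m) ^ 2 + a ^ 2)) =
      fun m : ℤ => (-1) ^ n / x ^ 2 * ((-1 : ℝ) ^ m / ((m : ℝ) ^ 2 + (a / x) ^ 2)) := by
    ext m
    rw [zpow_add₀ (by norm_num)]
    have : (0:ℝ) < m ^ 2 + (a / x) ^ 2 := by positivity
    have : (0:ℝ) < (x * m) ^ 2 + a ^ 2 := by positivity
    have e : (x * m) ^ 2 + a ^ 2 = x ^ 2 * (m ^ 2 + (a / x) ^ 2) := by field_simp
    rw [e]
    field_simp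
  rw [h2, h.tsum_eq, show Real.pi * (a / x) = Real.pi * a / x by ring]
  have hs : Real.sinh (Real.pi * a / x) ≠ 0 := by
    rw [Ne, Real.sinh_eq_zero]; have := Real.pi_ne_zero; positivity
  field_simp

lemma sinh_series {x b : ℝ} (hx : 0 < x) (hb : 0 < b) :
    HasSum (fun k : ℕ => Real.exp (-(Real.pi * b / x)) * (Real.exp (-(2 * (Real.pi * b / x)))) ^ k)
      (1 / (2 * Real.sinh (Real.pi * b / x))) := by
  have hp : 0 < Real.pi * b / x := by have := Real.pi_pos; positivity
  have h := (hasSum_geometric_of_lt_one (Real.exp_pos (-(2 * (Real.pi * b / x)))).le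
    (by rw [Real.exp_lt_one_iff]; linarith)).mul_left (Real.exp (-(Real.pi * b / x)))
  refine hs_congr h (fun _ => rfl) ?_
  have hs : 0 < Real.sinh (Real.pi * b / x) := Real.sinh_pos_iff.2 hp
  rw [Real.sinh_eq] at hs ⊢
  generalize Real.pi * b / x = w at *
  rw [show -(2 * w) = -w + -w by ring, Real.exp_add]
  have e : Real.exp w * Real.exp (-w) = 1 := by rw [← Real.exp_add]; simp
  generalize Real.exp w = u at *
  have hv : 0 < Real.exp (-w) := Real.exp_pos _
  generalize Real.exp (-w) = v at *
  have h3 : u - v ≠ 0 := by linarith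
  have h4 : 1 - v * v = (u - v) * v := by linear_combination -e
  rw [h4]
  field_simp

lemma log_pair {z : ℂ} (hz0 : z ≠ 0) (hz1 : ‖z‖ = 1) {a : ℝ} (ha : z + z⁻¹ = a) {r : ℝ} (hr : |r| < 1) :
    HasSum (fun n : ℕ => (-1 : ℝ) ^ (n + 1) * (z ^ n + (z⁻¹) ^ n).re * r ^ n / n) (Real.log (1 + a * r + r ^ 2)) := by
  have h1 : ‖z * r‖ < 1 := by rw [norm_mul, hz1, one_mul, Complex.norm_real]; exact hr
  have h2 : ‖z⁻¹ * r‖ < 1 := by rw [norm_mul, norm_inv, hz1, inv_one, one_mul, Complex.norm_real]; exact hr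
  have n1 : 1 + z * r ≠ 0 := by
    intro h
    have : z * r = -1 := by linear_combination h
    rw [this] at h1; simp at h1
  have n2 : 1 + z⁻¹ * r ≠ 0 := by
    intro h
    have : z⁻¹ * r = -1 := by linear_combination h
    rw [this] at h2; simp at h2
  have h := Complex.reCLM.hasSum ((Complex.hasSum_taylorSeries_log h1).add (Complex.hasSum_taylorSeries_log h2))
  refine hs_congr h (fun n => ?_) ?_
  · simp only [Complex.reCLM_apply]
    have : (-1 : ℂ) ^ (n + 1) * (z * r) ^ n / n + (-1) ^ (n + 1) * (z⁻¹ * r) ^ n / n =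
      (((-1 : ℝ) ^ (n + 1) * r ^ n / n : ℝ) : ℂ) * (z ^ n + (z⁻¹) ^ n) := by
      push_cast
      ring
    rw [this, Complex.re_ofReal_mul]
    ring
  · rw [Complex.reCLM_apply, Complex.add_re, Complex.log_re, Complex.log_re,
      ← Real.log_mul (norm_ne_zero_iff.2 n1) (norm_ne_zero_iff.2 n2), ← norm_mul]
    have : (1 + z * r) * (1 + z⁻¹ * r) = ((1 + a * r + r ^ 2 : ℝ) : ℂ) := by
      push_cast
      rw [← ha]
      field_simp
      ring
    rw [this, Complex.norm_real, Real.norm_eq_abs, Real.log_abs]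

lemma log_one_series {r : ℝ} (hr : |r| < 1) :
    HasSum (fun n : ℕ => (-1 : ℝ) ^ (n + 1) * r ^ n / n) (Real.log (1 + r)) := by
  have h := Complex.reCLM.hasSum (Complex.hasSum_taylorSeries_log (z := (r : ℂ)) (by rw [Complex.norm_real]; exact hr))
  refine hs_congr h (fun n => ?_) ?_
  · simp only [Complex.reCLM_apply]
    have : (-1 : ℂ) ^ (n + 1) * (r : ℂ) ^ n / n  =
      (((-1 : ℝ) ^ (n + 1) * r ^ n / n : ℝ) : ℂ) := by
      push_cast
      ring
    rw [this, Complex.ofReal_re]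
  · rw [Complex.reCLM_apply, Complex.log_re]
    have : (1 + (r : ℂ)) = ((1 + r : ℝ) : ℂ) := by
      push_cast
      rfl
    rw [this, Complex.norm_real, Real.norm_eq_abs, Real.log_abs]

lemma s5_pos : 0 < Real.sqrt 5 := Real.sqrt_pos.2 (by norm_num)

/-- the logarithmic evaluation of one row -/
noncomputable def RowS (r : ℝ) : ℝ := 2 / 5 * Real.log (1 + r) +
    (-1 / 10 + 1 / (2 * Real.sqrt 5)) * Real.log (1 + al * r + r ^ 2) +
    (-1 / 10 - 1 / (2 * Real.sqrt 5)) * Real.log (1 + be * r + r ^ 2)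

lemma RowS_nat {r : ℝ} (hr : |r| < 1) :
    HasSum (fun n : ℕ => if n % 5 = 1 ∨ n % 5 = 4 then (-1 : ℝ) ^ (n + 1) * r ^ n / n else 0) (RowS r) := by
  obtain ⟨z, hz5, hz1, ha, hb⟩ := exists_zeta
  have hz0 : z ≠ 0 := by rintro rfl; simp at hz5
  have hn := norm_root hz5
  have hn2 : ‖z ^ 2‖ = 1 := by rw [norm_pow, hn, one_pow]
  have l1 := log_pair hz0 hn ha hr
  have l2 := log_pair (pow_ne_zero 2 hz0) hn2 (a := be) (by rw [← hb, inv_pow]) hr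
  have l0 := log_one_series hr
  have hi5 : (z⁻¹) ^ 5 = 1 := by rw [inv_pow, hz5, inv_one]
  have h := ((l0.mul_left (2 / 5)).add (l1.mul_left (-1 / 10 + 1 / (2 * Real.sqrt 5)))).add
    (l2.mul_left (-1 / 10 - 1 / (2 * Real.sqrt 5)))
  refine hs_congr h (fun n => ?_) rfl
  have hzi : z * z⁻¹ = 1 := mul_inv_cancel₀ hz0
  have i1 : z⁻¹ = z ^ 4 := by
    field_simp; rw [← hz5]
  have s5p := s5_pos
  have sq := s5
  have A1 : z + z ^ 4 = al := by rw [← i1]; exact ha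
  have A2 : z ^ 2 + z ^ 3 = be := by
    rw [← hb, i1]; linear_combination (-z ^ 3) * hz5
  have key : ∀ c d : ℝ, (z ^ n + (z⁻¹) ^ n).re = c → (((z ^ 2) ^ n + ((z ^ 2)⁻¹) ^ n).re = d) →
      (2 / 5 + (-1 / 10 + 1 / (2 * Real.sqrt 5)) * c + (-1 / 10 - 1 / (2 * Real.sqrt 5)) * d =
        if n % 5 = 1 ∨ n % 5 = 4 then 1 else 0) → 
      (if n % 5 = 1 ∨ n % 5 = 4 then (-1 : ℝ) ^ (n + 1) * r ^ n / n else 0) =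
      2 / 5 * ((-1 : ℝ) ^ (n + 1) * r ^ n / n) +
      (-1 / 10 + 1 / (2 * Real.sqrt 5)) * ((-1 : ℝ) ^ (n + 1) * (z ^ n + (z⁻¹) ^ n).re * r ^ n / n) +
      (-1 / 10 - 1 / (2 * Real.sqrt 5)) * ((-1 : ℝ) ^ (n + 1) * ((z ^ 2) ^ n + ((z ^ 2)⁻¹) ^ n).re * r ^ n / n) := by
    intro c d hc hd he
    rw [hc, hd]
    have : (if n % 5 = 1 ∨ n % 5 = 4 then (-1 : ℝ) ^ (n + 1) * r ^ n / n else 0) =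
      (if n % 5 = 1 ∨ n % 5 = 4 then 1 else 0) * ((-1 : ℝ) ^ (n + 1) * r ^ n / n) := by
      split_ifs <;> simp
    rw [this, ← he]
    ring
  have zs5 : (z ^ 2) ^ 5 = 1 := by rw [← pow_mul, mul_comm, pow_mul, hz5, one_pow]
  have zsi5 : ((z ^ 2)⁻¹) ^ 5 = 1 := by rw [inv_pow, zs5, inv_one]
  have zsi : (z ^ 2)⁻¹ = z ^ 3 := by
    field_simp; rw [← hz5]
  have hlt : n % 5 < 5 := Nat.mod_lt _ (by norm_num)
  have ea : al = (Real.sqrt 5 - 1) / 2 := rfl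
  have eb : be = -(Real.sqrt 5 + 1) / 2 := rfl
  have RA : ∀ w : ℂ, w = al → w.re = al := fun w h => by rw [h, Complex.ofReal_re]
  have RB : ∀ w : ℂ, w = be → w.re = be := fun w h => by rw [h, Complex.ofReal_re]
  have fin1 : 2 / 5 + (-1 / 10 + 1 / (2 * Real.sqrt 5)) * al + (-1 / 10 - 1 / (2 * Real.sqrt 5)) * be = 1 := by
    rw [ea, eb]; field_simp; ring
  have fin2 : 2 / 5 + (-1 / 10 + 1 / (2 * Real.sqrt 5)) * be + (-1 / 10 - 1 / (2 * Real.sqrt 5)) * al = 0 := by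
    rw [ea, eb]; field_simp; ring
  have z6 : z ^ 6 = z := by linear_combination z * hz5
  have cases : n % 5 = 0 ∨ n % 5 = 1 ∨ n % 5 = 2 ∨ n % 5 = 3 ∨ n % 5 = 4 := by lia
  have p1 := pow_eq_pow_mod n hz5
  have p2 := pow_eq_pow_mod n hi5
  have p3 := pow_eq_pow_mod n zs5
  have p4 := pow_eq_pow_mod n zsi5
  have f1 : z ^ 1 + (z ^ 4) ^ 1 = al := by rw [← A1]; ring
  have f2 : z ^ 2 + (z ^ 4) ^ 2 = be := by rw [← A2]; linear_combination (z ^ 3) * hz5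
  have f3 : z ^ 3 + (z ^ 4) ^ 3 = be := by rw [← A2]; linear_combination (z ^ 2 * (z ^ 5 + 1)) * hz5
  have f4 : z ^ 4 + (z ^ 4) ^ 4 = al := by rw [← A1]; linear_combination (z * (z ^ 10 + z ^ 5 + 1)) * hz5
  have g1 : (z ^ 2) ^ 1 + (z ^ 3) ^ 1 = be := by rw [← A2]; ring
  have g2 : (z ^ 2) ^ 2 + (z ^ 3) ^ 2 = al := by rw [← A1]; linear_combination z * hz5
  have g3 : (z ^ 2) ^ 3 + (z ^ 3) ^ 3 = al := by rw [← A1]; linear_combination (z + z ^ 4) * hz5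
  have g4 : (z ^ 2) ^ 4 + (z ^ 3) ^ 4 = be := by rw [← A2]; linear_combination (z ^ 3 + z ^ 2 * (z ^ 5 + 1)) * hz5
  rcases cases with h | h | h | h | h
  · refine key 2 2 ?_ ?_ ?_
    · rw [p1, p2, h]; norm_num
    · rw [p3, p4, h]; norm_num
    · rw [if_neg (by lia)]; ring
  · refine key al be ?_ ?_ ?_
    · rw [p1, p2, h, i1]; exact RA _ f1
    · rw [p3, p4, h, zsi]; exact RB _ g1
    · rw [if_pos (by lia)]; exact fin1
  · refine key be al ?_ ?_ ?_
    · rw [p1, p2, h, i1]; exact RB _ f2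
    · rw [p3, p4, h, zsi]; exact RA _ g2
    · rw [if_neg (by lia)]; exact fin2
  · refine key be al ?_ ?_ ?_
    · rw [p1, p2, h, i1]; exact RB _ f3
    · rw [p3, p4, h, zsi]; exact RA _ g3
    · rw [if_neg (by lia)]; exact fin2
  · refine key al be ?_ ?_ ?_
    · rw [p1, p2, h, i1]; exact RA _ f4
    · rw [p3, p4, h, zsi]; exact RB _ g4
    · rw [if_pos (by lia)]; exact fin1

/-- the row index -/
def bb (n : ℤ) : ℕ := (5 * n + 1).natAbs

lemma bb_inj : Function.Injective bb := by
  intro a b h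
  unfold bb at h
  lia

lemma bb_pos (n : ℤ) : 0 < bb n := by unfold bb; lia

lemma bb_ge (n : ℤ) : n.natAbs ≤ bb n := by unfold bb; lia

lemma bb_sign (n : ℤ) : (-1 : ℝ) ^ (bb n + 1) = (-1) ^ n := by
  rcases Int.even_or_odd n with h | h
  · rw [h.neg_one_zpow, Even.neg_one_pow]
    obtain ⟨k, hk⟩ := h
    rw [Nat.even_iff]; unfold bb; lia
  · rw [h.neg_one_zpow, Odd.neg_one_pow]
    obtain ⟨k, hk⟩ := h
    rw [Nat.odd_iff]; unfold bb; lia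

lemma RowS_int {r : ℝ} (hr : |r| < 1) :
    HasSum (fun n : ℤ => (-1 : ℝ) ^ n * r ^ (bb n) / (bb n : ℝ)) (RowS r) := by
  have h := RowS_nat hr
  rw [← bb_inj.hasSum_iff] at h
  · refine hs_congr h (fun n => ?_) rfl
    simp only [Function.comp]
    rw [if_pos (by unfold bb; lia), bb_sign]
  · intro m hm
    rw [if_neg]
    intro h
    apply hm
    rcases h with h | h
    · exact ⟨(m : ℤ) / 5, by unfold bb; lia⟩
    · exact ⟨-((m : ℤ) + 1) / 5, by unfold bb; lia⟩

lemma log_prod {f : ℕ → ℝ} (hf : ∀ k, 0 < f k) (hs : Summable (fun k => f k - 1)) :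
    HasSum (fun k => Real.log (f k)) (Real.log (∏' k, f k)) ∧ 0 < ∏' k, f k := by
  have h := Real.summable_log_one_add_of_summable hs
  have h1 : Summable (fun k => Real.log (f k)) := by
    refine h.congr fun k => ?_
    rw [add_sub_cancel]
  have h2 := Real.hasProd_of_hasSum_log hf h1.hasSum
  rw [h2.tprod_eq, Real.log_exp]
  exact ⟨h1.hasSum, Real.exp_pos _⟩

lemma sqrt5_lt : Real.sqrt 5 < 3 := by
  rw [Real.sqrt_lt' (by norm_num)]; norm_num

lemma quad_pos {a r : ℝ} (ha : a ^ 2 < 4) : 0 < 1 + a * r + r ^ 2 := by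
  nlinarith [sq_nonneg (r + a / 2)]

lemma al_lt : al ^ 2 < 4 := by
  rw [al_sq]; unfold al; linarith [s5_pos]

lemma be_lt : be ^ 2 < 4 := by
  rw [be_sq]; unfold be; linarith [sqrt5_lt]

lemma r_summable {q : ℝ} (h0 : 0 < q) (h1 : q < 1) : Summable (fun k : ℕ => q ^ (2 * k + 1)) := by
  have := (summable_geometric_of_lt_one (sq_nonneg q) (by nlinarith : q ^ 2 < 1)).mul_left q
  refine this.congr fun k => ?_
  rw [← pow_mul, pow_succ]; ring

lemma r_lt {q : ℝ} (h0 : 0 < q) (h1 : q < 1) (k : ℕ) : q ^ (2 * k + 1) < 1 :=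
  pow_lt_one₀ h0.le h1 (by lia)

lemma neg_odd_pow (q : ℝ) (k : ℕ) : (-q) ^ (2 * k + 1) = - q ^ (2 * k + 1) :=
  Odd.neg_pow ⟨k, rfl⟩ q

lemma WW_log {q a : ℝ} (h0 : 0 < q) (h1 : q < 1) (ha : a ^ 2 < 4) :
    HasSum (fun k : ℕ => Real.log (1 + a * q ^ (2 * k + 1) + (q ^ (2 * k + 1)) ^ 2)) (Real.log (WW a (-q))) ∧
      0 < WW a (-q) := by
  have e : WW a (-q) = ∏' k : ℕ, (1 + a * q ^ (2 * k + 1) + (q ^ (2 * k + 1)) ^ 2) := by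
    unfold WW
    refine tprod_congr fun k => ?_
    rw [neg_odd_pow]; ring
  rw [e]
  refine log_prod (fun k => quad_pos ha) ?_
  have hr := r_summable h0 h1
  have hr2 : Summable (fun k : ℕ => (q ^ (2 * k + 1)) ^ 2) := by
    refine Summable.of_nonneg_of_le (fun k => by positivity) (fun k => ?_) hr
    have := r_lt h0 h1 k
    have : 0 < q ^ (2 * k + 1) := by positivity
    nlinarith
  refine ((hr.mul_left a).add hr2).congr fun k => ?_
  ring

lemma poch_log {q : ℝ} (h0 : 0 < q) (h1 : q < 1) :
    HasSum (fun k : ℕ => Real.log (1 + q ^ (2 * k + 1))) (Real.log (poch (-q) ((-q) ^ 2))) ∧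
      0 < poch (-q) ((-q) ^ 2) := by
  have e : poch (-q) ((-q) ^ 2) = ∏' k : ℕ, (1 + q ^ (2 * k + 1)) := by
    unfold poch
    refine tprod_congr fun k => ?_
    rw [neg_sq, ← pow_mul, pow_succ q (2 * k)]; ring
  rw [e]
  refine log_prod (fun k => by positivity) ?_
  refine (r_summable h0 h1).congr fun k => ?_
  ring

lemma poch5_eq {q : ℝ} (h0 : 0 < q) (h1 : q < 1) :
    poch ((-q) ^ 5) ((-q) ^ 10) = poch (-q) ((-q) ^ 2) * WW al (-q) * WW be (-q) := by
  have hq : ‖(-q)‖ < 1 := by rw [norm_neg, Real.norm_eq_abs, abs_of_pos h0]; exact h1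
  have m0 := poch_mult (-q) (norm_pow_lt hq (two_ne_zero))
  have m1 := WW_mult al hq
  have m2 := WW_mult be hq
  have : poch (-q) ((-q) ^ 2) * WW al (-q) * WW be (-q) = 
    (∏' k : ℕ, (1 - (-q) * ((-q) ^ 2) ^ k)) * (∏' k : ℕ, (1 - al * (-q) ^ (2 * k + 1) + ((-q) ^ (2 * k + 1)) ^ 2)) *
     ∏' k : ℕ, (1 - be * (-q) ^ (2 * k + 1) + ((-q) ^ (2 * k + 1)) ^ 2) := rfl
  rw [this, ← m0.tprod_mul m1, ← (m0.mul m1).tprod_mul m2]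
  unfold poch
  refine tprod_congr fun k => ?_
  have e1 : (-q) * ((-q) ^ 2) ^ k = (-q) ^ (2 * k + 1) := by rw [← pow_mul, pow_succ]; ring
  have e2 : (-q) ^ 5 * ((-q) ^ 10) ^ k = ((-q) ^ (2 * k + 1)) ^ 5 := by rw [← pow_mul, ← pow_mul, ← pow_add]; congr 1; ring
  rw [e1, e2]
  generalize (-q) ^ (2 * k + 1) = u
  have eb : be = -1 - al := by linarith [al_add]
  rw [eb]
  have := al_sq
  linear_combination (u ^ 2 - u ^ 3) * this

lemma row_hasSum {x : ℝ} (hx : 0 < x) (n : ℤ) {q : ℝ} (hq : q = Real.exp (-Real.pi / x)) :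
    HasSum (fun k : ℕ => (-1 : ℝ) ^ n * (q ^ (2 * k + 1)) ^ (bb n) / (bb n : ℝ))
      (x / (2 * Real.pi) * ∑' m : ℤ, (-1 : ℝ) ^ (m + n) / ((x * m) ^ 2 + (5 * (n : ℝ) + 1) ^ 2)) := by
  have ha : (5 * (n : ℝ) + 1) ≠ 0 := by
    have : (5 * n + 1 : ℤ) ≠ 0 := by lia
    exact_mod_cast this
  have hb : (0 : ℝ) < bb n := by exact_mod_cast bb_pos n
  have hbb : (bb n : ℝ) = |5 * (n : ℝ) + 1| := by
    unfold bb; rw [Nat.cast_natAbs]; push_cast; rfl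
  rw [inner_sum_eval hx ha]
  have hs : (5 * (n : ℝ) + 1) * Real.sinh (Real.pi * (5 * (n : ℝ) + 1) / x) =
      bb n * Real.sinh (Real.pi * bb n / x) := by
    rcases abs_choice (5 * (n : ℝ) + 1) with h | h
    · rw [hbb, h]
    · rw [hbb, h, show Real.pi * -(5 * (n : ℝ) + 1) / x = -(Real.pi * (5 * (n : ℝ) + 1) / x) by ring, Real.sinh_neg]
      ring
  rw [hs]
  have hsinh : 0 < Real.sinh (Real.pi * bb n / x) := Real.sinh_pos_iff.2 (by have := Real.pi_pos; positivity)
  have h := (sinh_series hx hb).mul_left ((-1 : ℝ) ^ n / bb n)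
  refine hs_congr h (fun k => ?_) ?_
  · have : (q ^ (2 * k + 1)) ^ (bb n) = Real.exp (-(Real.pi * bb n / x)) * (Real.exp (-(2 * (Real.pi * bb n / x)))) ^ k := by
      rw [hq, ← Real.exp_nat_mul, ← Real.exp_nat_mul, ← Real.exp_nat_mul, ← Real.exp_add]
      congr 1
      push_cast
      ring
    rw [this]; ring
  · have := Real.pi_pos
    field_simp

lemma dbl_summable {q : ℝ} (h0 : 0 < q) (h1 : q < 1) :
    Summable (fun p : ℕ × ℤ => (-1 : ℝ) ^ p.2 * (q ^ (2 * p.1 + 1)) ^ (bb p.2) / (bb p.2 : ℝ)) := by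
  have g1 := summable_geometric_of_lt_one h0.le h1
  have g2 : Summable (fun n : ℤ => q ^ n.natAbs) := by
    apply Summable.of_nat_of_neg
    · simpa using g1
    · simpa using g1
  have g := g1.mul_of_nonneg g2 (fun k => by positivity) (fun n => by positivity)
  refine Summable.of_norm_bounded g fun p => ?_
  rw [norm_div, norm_mul, norm_zpow, norm_neg, norm_one, one_zpow, one_mul, ← pow_mul, ← pow_add]
  have hb : (1 : ℝ) ≤ bb p.2 := by exact_mod_cast bb_pos p.2
  rw [Real.norm_of_nonneg (by positivity), Real.norm_of_nonneg (by positivity)]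
  refine (div_le_self (by positivity) hb).trans ?_
  refine pow_le_pow_of_le_one h0.le h1.le ?_
  have := bb_ge p.2
  have := bb_pos p.2
  nlinarith

lemma total {x : ℝ} (hx : 0 < x) {q : ℝ} (hq : q = Real.exp (-Real.pi / x)) :
    HasSum (fun n : ℤ => ∑' m : ℤ, (-1 : ℝ) ^ (m + n) / ((x * m) ^ 2 + (5 * (n : ℝ) + 1) ^ 2))
      (2 * Real.pi / x * (2 / 5 * Real.log (poch (-q) ((-q) ^ 2)) +
    (-1 / 10 + 1 / (2 * Real.sqrt 5)) * Real.log (WW al (-q)) +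
    (-1 / 10 - 1 / (2 * Real.sqrt 5)) * Real.log (WW be (-q)))) := by
  have h0 : 0 < q := hq ▸ Real.exp_pos _
  have h1 : q < 1 := by
    rw [hq, Real.exp_lt_one_iff, neg_div]; have := Real.pi_pos; 
    have : 0 < Real.pi / x := by positivity
    linarith
  have hS := (dbl_summable h0 h1).hasSum
  have r1 := hS.prod_fiberwise (fun k : ℕ => RowS_int (r := q ^ (2 * k + 1))
    (by rw [abs_of_pos (by positivity)]; exact r_lt h0 h1 k))
  have r2 : HasSum (fun k : ℕ => RowS (q ^ (2 * k + 1))) (2 / 5 * Real.log (poch (-q) ((-q) ^ 2)) +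
    (-1 / 10 + 1 / (2 * Real.sqrt 5)) * Real.log (WW al (-q)) +
    (-1 / 10 - 1 / (2 * Real.sqrt 5)) * Real.log (WW be (-q))) :=
    (((poch_log h0 h1).1.mul_left _).add ((WW_log h0 h1 al_lt).1.mul_left _)).add ((WW_log h0 h1 be_lt).1.mul_left _)
  rw [r1.unique r2] at hS
  have hS' := (Equiv.prodComm ℤ ℕ).hasSum_iff.2 hS
  have r3 := hS'.prod_fiberwise (fun n : ℤ => row_hasSum hx n hq)
  refine hs_congr (r3.mul_left (2 * Real.pi / x)) (fun n => ?_) rfl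
  have := Real.pi_pos
  field_simp

lemma final_identity {x : ℝ} (hx : 0 < x) {q μ : ℝ} (hq : q = Real.exp (-Real.pi / x))
    (hμ : μ = RR (-q) * (RR (q ^ 2)) ^ 2) :
    -(Real.pi / (5 * Real.sqrt 5 * x)) *
          Real.log ((2 - μ + 18 * μ ^ 2 + μ ^ 3 + 2 * μ ^ 4 + 5 * Real.sqrt 5 * (μ + μ ^ 3))
            / (2 - μ + 18 * μ ^ 2 + μ ^ 3 + 2 * μ ^ 4 - 5 * Real.sqrt 5 * (μ + μ ^ 3)))
        - Real.pi / (5 * x) * Real.log ((1 + μ - μ ^ 2) / (1 - 4 * μ - μ ^ 2)) =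
    2 * Real.pi / x * (2 / 5 * Real.log (poch (-q) ((-q) ^ 2)) +
    (-1 / 10 + 1 / (2 * Real.sqrt 5)) * Real.log (WW al (-q)) +
    (-1 / 10 - 1 / (2 * Real.sqrt 5)) * Real.log (WW be (-q))) := by
  have h0 : 0 < q := hq ▸ Real.exp_pos _
  have h1 : q < 1 := by
    rw [hq, Real.exp_lt_one_iff, neg_div]; have := Real.pi_pos; 
    have : 0 < Real.pi / x := by positivity
    linarith
  have hn : ‖(-q)‖ < 1 := by rw [norm_neg, Real.norm_eq_abs, abs_of_pos h0]; exact h1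
  obtain ⟨E1, E2⟩ := products_eval (neg_ne_zero.2 h0.ne') hn (k := μ) (by rw [hμ, neg_sq])
  have P0 := (poch_log h0 h1).2
  have P1 := (WW_log h0 h1 al_lt).2
  have P2 := (WW_log h0 h1 be_lt).2
  rw [poch5_eq h0 h1] at E1
  rw [← inv_div (1 - 4 * μ - μ ^ 2), ← inv_div (2 - μ + 18 * μ ^ 2 + μ ^ 3 + 2 * μ ^ 4 - 5 * Real.sqrt 5 * (μ + μ ^ 3)),
    Real.log_inv, Real.log_inv, ← E1, ← E2, Real.log_pow, Real.log_div P1.ne' P2.ne',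
    Real.log_div (by positivity) (by positivity), Real.log_mul (by positivity) P2.ne', Real.log_mul P0.ne' P1.ne',
    Real.log_pow]
  have := s5_pos
  push_cast
  field_simp
  ring

/-- For real `x > 0`, with `q = e^{-π/x}` and `μ = R(-q) R²(q²)`,
`F_{(5,1)}(x) = -(π/(5√5 x)) log((2 - μ + 18μ² + μ³ + 2μ⁴ + 5√5(μ + μ³))
  /(2 - μ + 18μ² + μ³ + 2μ⁴ - 5√5(μ + μ³))) - (π/(5x)) log((1 + μ - μ²)/(1 - 4μ - μ²))`. -/
theorem F51_evaluation (x : ℝ) (hx : 0 < x) (q μ : ℝ)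
    (hq : q = Real.exp (-Real.pi / x))
    (hμ : μ = RR (-q) * (RR (q ^ 2)) ^ 2) :
    Tendsto (fun N : ℕ => ∑ n ∈ Finset.Ioo (-(N : ℤ)) (N : ℤ),
        ∑' m : ℤ, (-1 : ℝ) ^ (m + n) / ((x * m) ^ 2 + (5 * (n : ℝ) + 1) ^ 2))
      atTop
      (nhds (-(Real.pi / (5 * Real.sqrt 5 * x)) *
          Real.log ((2 - μ + 18 * μ ^ 2 + μ ^ 3 + 2 * μ ^ 4 + 5 * Real.sqrt 5 * (μ + μ ^ 3))
            / (2 - μ + 18 * μ ^ 2 + μ ^ 3 + 2 * μ ^ 4 - 5 * Real.sqrt 5 * (μ + μ ^ 3)))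
        - Real.pi / (5 * x) * Real.log ((1 + μ - μ ^ 2) / (1 - 4 * μ - μ ^ 2)))) := by
  rw [final_identity hx hq hμ]
  exact (total hx hq).comp Finset.tendsto_Ioo_neg
end

section
/- Let x > 0 be real and set q = e^{−π/x}. Then F_{(3,1)}(x) = −(2π/(3x)) · log( χ(q³) / χ³(q) ). -/
open Filter

/-- Ramanujan's theta function `χ(q) = ∏_{m=0}^∞ (1 + q^{2m+1})`. -/
noncomputable def chi (q : ℝ) : ℝ := ∏' m : ℕ, (1 + q ^ (2 * m + 1))

open Real in
lemma aux_coth_nat (c : ℝ) (hc : 0 < c) :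
    HasSum (fun m : ℕ => 1 / (((m : ℝ) + 1) ^ 2 + c ^ 2))
      ((π * (cosh (π * c) / sinh (π * c)) - 1 / c) / (2 * c)) := by
  have hz : ((c : ℂ) * Complex.I) ∈ Complex.integerComplement := by
    rw [Complex.mem_integerComplement_iff]
    rintro ⟨n, hn⟩
    have := congrArg Complex.im hn
    simp at this
    exact hc.ne this
  have h1 := cot_series_rep' hz
  have h2 := (summable_cotTerm hz).hasSum
  simp only [cotTerm] at h2
  rw [← h1] at h2
  have h3 := Complex.hasSum_im (h2.mul_left (1 / (-2 * (c : ℂ))))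
  have hs : sinh (π * c) ≠ 0 := (Real.sinh_pos_iff.2 (by positivity)).ne'
  convert! h3 using 1
  · funext m
    have e : (1 / (-2 * (c : ℂ))) * (1 / ((c : ℂ) * Complex.I - (m + 1)) + 1 / ((c : ℂ) * Complex.I + (m + 1)))
        = ((1 / (((m : ℝ) + 1) ^ 2 + c ^ 2) : ℝ) : ℂ) * Complex.I := by
      have n1 : (c : ℂ) * Complex.I - (m + 1) ≠ 0 := by
        intro h
        have := congrArg Complex.im h
        simp at this
        exact hc.ne' this
      have n2 : (c : ℂ) * Complex.I + (m + 1) ≠ 0 := by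
        intro h
        have := congrArg Complex.im h
        simp at this
        exact hc.ne' this
      have n3 : (((m : ℂ) + 1) ^ 2 + c ^ 2) ≠ 0 := by
        have : (((m : ℝ) + 1) ^ 2 + c ^ 2) ≠ 0 := by positivity
        exact_mod_cast this
      have n4 : (c : ℂ) ≠ 0 := by exact_mod_cast hc.ne'
      have key : ((c : ℂ) * Complex.I - (m + 1)) * ((c : ℂ) * Complex.I + (m + 1))
          = - (((m : ℂ) + 1) ^ 2 + c ^ 2) := by
        ring_nf; rw [Complex.I_sq]; ring
      rw [one_div_add_one_div n1 n2, key]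
      push_cast
      field_simp
      ring
    rw [e]
    simp only [Complex.im_ofReal_mul, Complex.I_im, mul_one]
  · have e : (1 / (-2 * (c : ℂ))) * (π * Complex.cot (π * (c * Complex.I)) - 1 / (c * Complex.I))
        = (((π * (cosh (π * c) / sinh (π * c)) - 1 / c) / (2 * c) : ℝ) : ℂ) * Complex.I := by
      have n4 : (c : ℂ) ≠ 0 := by exact_mod_cast hc.ne'
      have n5 : Complex.sinh (π * c) ≠ 0 := by exact_mod_cast hs
      have hI := Complex.I_ne_zero
      rw [Complex.cot, ← mul_assoc, Complex.cos_mul_I, Complex.sin_mul_I]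
      push_cast
      field_simp
      ring_nf
      simp only [Complex.I_sq]
      ring
    rw [e]
    simp only [Complex.im_ofReal_mul, Complex.I_im, mul_one]

open Real in
lemma aux_coth_int (c : ℝ) (hc : 0 < c) :
    HasSum (fun m : ℤ => 1 / ((m : ℝ) ^ 2 + c ^ 2))
      (π * (cosh (π * c) / sinh (π * c)) / c) := by
  have h := aux_coth_nat c hc
  have h0 : HasSum (fun m : ℕ => 1 / (((m : ℝ)) ^ 2 + c ^ 2))
      ((π * (cosh (π * c) / sinh (π * c)) - 1 / c) / (2 * c) + 1 / c ^ 2) := by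
    rw [← hasSum_nat_add_iff' 1]
    simpa using h
  have := HasSum.of_nat_of_neg_add_one (f := fun m : ℤ => 1 / ((m : ℝ) ^ 2 + c ^ 2))
    (by simpa using h0) (m' := (π * (cosh (π * c) / sinh (π * c)) - 1 / c) / (2 * c)) (by
      refine h.congr_fun ?_ |> fun h => h
      intro m
      push_cast
      ring_nf)
  convert! this using 1
  field_simp
  ring

open Real in
lemma aux_csch_int (c : ℝ) (hc : 0 < c) :
    HasSum (fun m : ℤ => (-1 : ℝ) ^ m / ((m : ℝ) ^ 2 + c ^ 2))
      (π / (c * sinh (π * c))) := by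
  have h1 := aux_coth_int c hc
  have h2 := aux_coth_int (c / 2) (by positivity)
  have hinj : Function.Injective (fun m : ℤ => 2 * m) := fun a b h => by
    simpa using h
  have h3 : HasSum (fun m : ℤ => if Even m then 2 * (1 / ((m : ℝ) ^ 2 + c ^ 2)) else 0)
      (1 / 2 * (π * (cosh (π * (c / 2)) / sinh (π * (c / 2))) / (c / 2))) := by
    rw [← hinj.hasSum_iff]
    · convert! h2.mul_left (1 / 2) using 1
      funext m
      simp
      field_simp
    · intro m hm
      rw [if_neg]
      rintro ⟨k, rfl⟩
      exact hm ⟨k, by simp; ring⟩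
  have h4 := h3.sub h1
  convert! h4 using 1
  · funext m
    split_ifs with hm
    · rw [hm.neg_one_zpow]; ring
    · rw [(Int.not_even_iff_odd.1 hm).neg_one_zpow]; ring
  · have hs : sinh (π * (c / 2)) ≠ 0 := (Real.sinh_pos_iff.2 (by positivity)).ne'
    have hs' : cosh (π * (c / 2)) ≠ 0 := (Real.cosh_pos _).ne'
    have e : π * c = 2 * (π * (c / 2)) := by ring
    rw [e, Real.sinh_two_mul, Real.cosh_two_mul]
    field_simp
    have := Real.cosh_sq (π * c / 2)
    linarith

open Real in
lemma aux_inner (x a : ℝ) (hx : 0 < x) (ha : 0 < a) :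
    HasSum (fun m : ℤ => (-1 : ℝ) ^ m / ((x * m) ^ 2 + a ^ 2))
      (π / (x * a * sinh (π * a / x))) := by
  have h := (aux_csch_int (a / x) (by positivity)).mul_left (1 / x ^ 2)
  convert! h using 1
  · funext m
    field_simp
  · rw [mul_div_assoc]
    field_simp

lemma aux_double (q : ℝ) (h0 : 0 < q) (h1 : q < 1) :
    Summable (fun p : ℕ × ℕ => (-1 : ℝ) ^ p.2 / (p.2 + 1) * q ^ ((p.2 + 1) * (2 * p.1 + 1))) := by
  have hg := summable_geometric_of_lt_one h0.le h1
  have := hg.mul_of_nonneg hg (fun _ => by positivity) (fun _ => by positivity)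
  refine Summable.of_norm_bounded this ?_
  rintro ⟨k, a⟩
  simp only [norm_mul, norm_div, norm_pow, norm_neg, norm_one, one_pow]
  rw [Real.norm_of_nonneg h0.le, Real.norm_of_nonneg (by positivity), ← pow_add]
  calc 1 / ((a : ℝ) + 1) * q ^ ((a + 1) * (2 * k + 1)) ≤ 1 * q ^ (k + a) := by
        gcongr ?_ * ?_
        · rw [div_le_one (by positivity)]
          have : (0 : ℝ) ≤ a := by positivity
          linarith
        · apply pow_le_pow_of_le_one h0.le h1.le
          nlinarith
    _ = _ := one_mul _

lemma aux_logchi (q : ℝ) (h0 : 0 < q) (h1 : q < 1) :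
    0 < chi q ∧ HasSum (fun a : ℕ => (-1 : ℝ) ^ (a + 1) / a * (q ^ a / (1 - q ^ (2 * a))))
      (Real.log (chi q)) := by
  have hS := (aux_double q h0 h1).hasSum
  set S := ∑' p : ℕ × ℕ, (-1 : ℝ) ^ p.2 / (p.2 + 1) * q ^ ((p.2 + 1) * (2 * p.1 + 1)) with hSdef
  have hk : HasSum (fun k : ℕ => Real.log (1 + q ^ (2 * k + 1))) S := by
    refine hS.prod_fiberwise fun k => ?_
    have hq : |-(q ^ (2 * k + 1))| < 1 := by
      rw [abs_neg, abs_of_pos (by positivity)]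
      exact pow_lt_one₀ h0.le h1 (by omega)
    have := (Real.hasSum_pow_div_log_of_abs_lt_one hq).neg
    rw [neg_neg, sub_neg_eq_add] at this
    convert! this using 1
    funext a
    rw [mul_comm (a + 1), pow_mul, neg_pow]
    ring
  have hchi : HasProd (fun k : ℕ => 1 + q ^ (2 * k + 1)) (Real.exp S) :=
    Real.hasProd_of_hasSum_log (fun k => by positivity) hk
  have hc : chi q = Real.exp S := hchi.tprod_eq
  refine ⟨hc ▸ Real.exp_pos _, ?_⟩
  rw [hc, Real.log_exp]
  have hS' := ((Equiv.prodComm ℕ ℕ).hasSum_iff.2 hS)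
  have ha : HasSum (fun a : ℕ => (-1 : ℝ) ^ a / (a + 1) * (q ^ (a + 1) / (1 - q ^ (2 * (a + 1))))) S := by
    refine hS'.prod_fiberwise fun a => ?_
    have hlt : q ^ (2 * (a + 1)) < 1 := pow_lt_one₀ h0.le h1 (by omega)
    have := ((hasSum_geometric_of_lt_one (by positivity) hlt).mul_left (q ^ (a + 1))).mul_left
      ((-1 : ℝ) ^ a / (a + 1))
    convert! this using 1
    funext k
    simp only [Function.comp, Equiv.prodComm_apply, Prod.swap]
    rw [← pow_mul, ← pow_add]
    congr 2
    ring
  rw [← hasSum_nat_add_iff' 1]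
  convert! ha using 1
  · funext a
    push_cast
    rw [pow_succ, pow_succ]
    ring
  · simp

lemma aux_three (q : ℝ) (h0 : 0 < q) (h1 : q < 1) :
    HasSum (fun n : ℤ => (-1 : ℝ) ^ n / ((3 * n + 1).natAbs : ℝ) *
        (q ^ (3 * n + 1).natAbs / (1 - q ^ (2 * (3 * n + 1).natAbs))))
      (Real.log (chi q) - Real.log (chi (q ^ 3)) / 3) := by
  have hv := (aux_logchi q h0 h1).2
  have hv3 := (aux_logchi (q ^ 3) (by positivity) (pow_lt_one₀ h0.le h1 (by omega))).2.div_const 3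
  have hinj : Function.Injective (fun m : ℕ => 3 * m) := fun a b h => by
    simpa using h
  have h3 : HasSum (fun b : ℕ => if 3 ∣ b then
      (-1 : ℝ) ^ (b + 1) / b * (q ^ b / (1 - q ^ (2 * b))) else 0)
      (Real.log (chi (q ^ 3)) / 3) := by
    rw [← hinj.hasSum_iff]
    · convert! hv3 using 1
      funext b
      simp only [Function.comp, dvd_mul_right, if_true]
      rw [← pow_mul, ← pow_mul, show 3 * (2 * b) = 2 * (3 * b) by ring]
      have : (-1 : ℝ) ^ (3 * b + 1) = (-1) ^ (b + 1) := by
        rw [show 3 * b + 1 = 2 * b + (b + 1) by ring, pow_add, pow_mul]; simp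
      rw [this]
      push_cast
      rw [mul_comm (3 : ℝ), ← div_div]
      ring
    · intro b hb
      rw [if_neg]
      rintro ⟨k, rfl⟩
      exact hb ⟨k, rfl⟩
  have hw := hv.sub h3
  have hinj2 : Function.Injective (fun n : ℤ => (3 * n + 1).natAbs) := fun a b h => by
    simp only at h
    omega
  rw [← hinj2.hasSum_iff] at hw
  · convert! hw using 1
    funext n
    simp only [Function.comp]
    rw [if_neg (by omega), sub_zero]
    have : (-1 : ℝ) ^ n = (-1 : ℝ) ^ ((3 * n + 1).natAbs + 1) := by
      rcases Int.even_or_odd n with h | h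
      · rw [h.neg_one_zpow, Even.neg_one_pow]
        obtain ⟨k, rfl⟩ := h
        exact ⟨((3 * (k + k) + 1).natAbs + 1) / 2, by omega⟩
      · rw [h.neg_one_zpow, Odd.neg_one_pow]
        obtain ⟨k, rfl⟩ := h
        exact ⟨((3 * (2 * k + 1) + 1).natAbs + 1) / 2, by omega⟩
    rw [this]
  · intro b hb
    have : 3 ∣ b := by
      by_contra h
      apply hb
      have : b % 3 = 1 ∨ b % 3 = 2 := by omega
      rcases this with h | h
      · exact ⟨(b / 3 : ℕ), by simp only; omega⟩
      · exact ⟨-((b / 3 : ℕ) + 1), by simp only; omega⟩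
    rw [if_pos this]
    ring

/-- For real `x > 0`, with `q = e^{-π/x}`,
`F_{(3,1)}(x) = -(2π/(3x)) log(χ(q³)/χ³(q))`. -/
theorem F31_in_terms_of_chi (x : ℝ) (hx : 0 < x) (q : ℝ)
    (hq : q = Real.exp (-Real.pi / x)) :
    Tendsto (fun N : ℕ => ∑ n ∈ Finset.Ioo (-(N : ℤ)) (N : ℤ),
        ∑' m : ℤ, (-1 : ℝ) ^ (m + n) / ((x * m) ^ 2 + (3 * (n : ℝ) + 1) ^ 2))
      atTop
      (nhds (-(2 * Real.pi / (3 * x)) * Real.log (chi (q ^ 3) / (chi q) ^ 3))) := by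
  have hq0 : 0 < q := hq ▸ Real.exp_pos _
  have hq1 : q < 1 := by
    rw [hq, Real.exp_lt_one_iff]
    exact div_neg_of_neg_of_pos (neg_neg_of_pos Real.pi_pos) hx
  have hmain := (aux_three q hq0 hq1).mul_left (2 * Real.pi / x)
  have hterm : ∀ n : ℤ, ∑' m : ℤ, (-1 : ℝ) ^ (m + n) / ((x * m) ^ 2 + (3 * (n : ℝ) + 1) ^ 2)
      = 2 * Real.pi / x * ((-1 : ℝ) ^ n / ((3 * n + 1).natAbs : ℝ) *
        (q ^ (3 * n + 1).natAbs / (1 - q ^ (2 * (3 * n + 1).natAbs)))) := by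
    intro n
    have hb : 0 < (3 * n + 1).natAbs := by omega
    have hsq : (3 * (n : ℝ) + 1) ^ 2 = (((3 * n + 1).natAbs : ℕ) : ℝ) ^ 2 := by
      rw [Nat.cast_natAbs]
      push_cast
      rw [sq_abs]
    rw [hsq]
    generalize (3 * n + 1).natAbs = b at hb ⊢
    have hb' : (0 : ℝ) < b := by exact_mod_cast hb
    have h := (aux_inner x b hx hb').mul_left ((-1 : ℝ) ^ n)
    have e : (fun m : ℤ => (-1 : ℝ) ^ (m + n) / ((x * m) ^ 2 + (b : ℝ) ^ 2))
        = fun m : ℤ => (-1 : ℝ) ^ n * ((-1 : ℝ) ^ m / ((x * m) ^ 2 + (b : ℝ) ^ 2)) := by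
      funext m
      rw [zpow_add₀ (by norm_num)]
      ring
    rw [e, h.tsum_eq]
    have hqb : q ^ b = Real.exp (-(Real.pi * b / x)) := by
      rw [hq, ← Real.exp_nat_mul]
      congr 1
      ring
    have hlt : q ^ (2 * b) < 1 := pow_lt_one₀ hq0.le hq1 (by omega)
    have hsinh : Real.sinh (Real.pi * b / x) = (1 - q ^ (2 * b)) / (2 * q ^ b) := by
      have hq2 : q ^ (2 * b) = q ^ b * q ^ b := by rw [← pow_add]; ring_nf
      have hi : Real.exp (Real.pi * b / x) = (q ^ b)⁻¹ := by rw [hqb, Real.exp_neg, inv_inv]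
      have hp : q ^ b ≠ 0 := by positivity
      rw [Real.sinh_eq, hi, ← hqb, hq2]
      field_simp
    have hne : 1 - q ^ (2 * b) ≠ 0 := by linarith
    rw [hsinh]
    field_simp
  simp_rw [hterm]
  obtain ⟨hc1, -⟩ := aux_logchi q hq0 hq1
  obtain ⟨hc3, -⟩ := aux_logchi (q ^ 3) (by positivity) (pow_lt_one₀ hq0.le hq1 (by omega))
  have hval : -(2 * Real.pi / (3 * x)) * Real.log (chi (q ^ 3) / (chi q) ^ 3)
      = 2 * Real.pi / x * (Real.log (chi q) - Real.log (chi (q ^ 3)) / 3) := by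
    rw [Real.log_div hc3.ne' (by positivity), Real.log_pow]
    field_simp
    push_cast
    ring
  rw [hval]
  refine Tendsto.comp (y := atTop) (g := fun s : Finset ℤ => ∑ n ∈ s, _) hmain ?_
  refine tendsto_atTop_finset_of_monotone ?_ ?_
  · intro a b hab
    refine Finset.Ioo_subset_Ioo ?_ ?_ <;> simpa using hab
  · intro n
    exact ⟨n.natAbs + 1, by rw [Finset.mem_Ioo]; constructor <;> omega⟩
end
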